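/- arXiv:1803.04204 — 9 statements merged into one kernel-verified Lean document; each statement's English description precedes it below -/
import Mathlib

section
/- Consider the semiparametric contextual bandit problem with d = 2 and two actions. For any algorithm that at each round t chooses its action a_t as a deterministic function of the observable history H_t = {x_{1:t}, a_{1:t-1}, r_{1:t-1}}, there exists a semiparametric contextual bandit instance (a choice of parameter θ ∈ ℝ², contexts, confounding terms f_t chosen by an adaptive adversary, and zero noise) on which the regret of the algorithm over T rounds is at least T/2. Concretely: with contexts x_t = {e₁, e₂} at every round, θ ∈ {e₁, e₂}, ξ_t = 0, and f_t(x_t) = −1{a_t = argmax_a ⟨θ, z_{t,a}⟩}, the observed reward is 0 at every round, and for at least one of the two choices of θ the algorithm plays the suboptimal action at least T/2 times, incurring regret at least T/2. -/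
open Matrix Finset

/-- The two feature vectors / parameters: `e false = e₁ = (1,0)`, `e true = e₂ = (0,1)` in `ℝ²`.
Actions are identified with `Bool` (`false ↦ e₁`, `true ↦ e₂`). -/
noncomputable def lbVec : Bool → (Fin 2 → ℝ) := fun b => if b then ![0, 1] else ![1, 0]

theorem lbVec_dotProduct_lbVec (b c : Bool) :
    lbVec b ⬝ᵥ lbVec c = if c = b then (1 : ℝ) else 0 := by
  cases b <;> cases c <;> simp [lbVec]

/-- The per-round regrets of a common action on the two instances add up to one. -/
theorem lbVec_regret_add_regret (c : Bool) :
    lbVec false ⬝ᵥ (lbVec false - lbVec c) + lbVec true ⬝ᵥ (lbVec true - lbVec c) = 1 := by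
  cases c <;> simp [lbVec]

/-- **Lower bound against deterministic algorithms (Proposition 1).**
Consider the semiparametric contextual bandit problem with `d = 2` and two actions, with the
context `x_t = {e₁, e₂}` at every round.  An algorithm chooses `a_t` as a deterministic
function `alg` of the observable history (the round index, which determines `x_{1:t}`, and the
past actions and rewards).  For the instances with `θ ∈ {e₁, e₂}`, zero noise `ξ_t = 0`, and
adversarial confounder `f_t(x_t) = −1{a_t = argmax_a ⟨θ, z_{t,a}⟩}`: the observed reward
`r_t = ⟨θ, z_{t,a_t}⟩ + f_t(x_t)` is `0` at every round, and for at least one of the two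
choices of `θ` the regret `∑_{t=1}^T ⟨θ, z_{t,a_t^⋆} − z_{t,a_t}⟩` is at least `T/2`. -/
theorem stmt_0 (T : ℕ)
    (alg : (t : ℕ) → (Fin t → Bool) → (Fin t → ℝ) → Bool)
    (a : Bool → ℕ → Bool) (r : Bool → ℕ → ℝ)
    -- reward of round `t` on the instance `θ`: linear part plus confounder, zero noise
    (hr : ∀ θ t, r θ t =
      lbVec θ ⬝ᵥ lbVec (a θ t) - (if a θ t = θ then (1 : ℝ) else 0))
    -- the algorithm's action is a deterministic function of the observable history
    (ha : ∀ θ t, a θ t =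
      alg t (fun i : Fin t => a θ i) (fun i : Fin t => r θ i)) :
    (∀ θ t, r θ t = 0) ∧
      ∃ θ : Bool, (T : ℝ) / 2 ≤
        ∑ t ∈ Finset.range T, lbVec θ ⬝ᵥ (lbVec θ - lbVec (a θ t)) := by
  have rewards_zero : ∀ θ t, r θ t = 0 := fun θ t => by
    rw [hr, lbVec_dotProduct_lbVec, sub_self]
  have actions_eq : ∀ t, a false t = a true t := by
    intro t
    induction t using Nat.strong_induction_on with
    | _ t ih =>
      rw [ha false t, ha true t]
      congr 1
      · exact funext fun i => ih i i.isLt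
      · exact funext fun i => by rw [rewards_zero, rewards_zero]
  have regret_total :
      ∑ t ∈ Finset.range T, lbVec false ⬝ᵥ (lbVec false - lbVec (a false t)) +
        ∑ t ∈ Finset.range T, lbVec true ⬝ᵥ (lbVec true - lbVec (a true t)) = T := by
    simp only [← Finset.sum_add_distrib, actions_eq, lbVec_regret_add_regret, Finset.sum_const,
      Finset.card_range, nsmul_eq_mul, mul_one]
  refine ⟨rewards_zero, ?_⟩
  by_contra! regret_lt
  linarith [regret_lt false, regret_lt true]
end

section
/- Let X₁,…,X_n be vectors in ℝ^d with ‖X_i‖₂ ≤ L for all i ∈ [n], and let λ > 0. Define Γ := λI + Σ_{i=1}^n X_i X_iᵀ. Then det(Γ) ≤ (λ + nL²/d)^d. -/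
open Matrix Finset

/-- AM-GM for the eigenvalues of a positive semidefinite matrix. -/
theorem Matrix.PosSemidef.det_le_trace_div_card_pow {m : Type*} [Fintype m] [DecidableEq m]
    [Nonempty m] {A : Matrix m m ℝ} (hA : A.PosSemidef) :
    A.det ≤ (A.trace / Fintype.card m) ^ Fintype.card m := by
  have hcard : (Fintype.card m : ℝ) ≠ 0 := by simp
  have amgm := Real.geom_mean_le_arith_mean_weighted univ
    (fun _ : m => (Fintype.card m : ℝ)⁻¹) hA.isHermitian.eigenvalues
    (fun _ _ => by positivity) (by simp) (fun i _ => hA.eigenvalues_nonneg i)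
  rw [← mul_sum, Real.finsetProd_rpow univ _ (fun i _ => hA.eigenvalues_nonneg i)] at amgm
  have hdet : A.det = ∏ i, hA.isHermitian.eigenvalues i := by
    simpa using hA.isHermitian.det_eq_prod_eigenvalues
  have htrace : A.trace = ∑ i, hA.isHermitian.eigenvalues i := by
    simpa using hA.isHermitian.trace_eq_sum_eigenvalues
  rw [← hdet, ← htrace, inv_mul_eq_div] at amgm
  calc A.det = (A.det ^ (Fintype.card m : ℝ)⁻¹) ^ Fintype.card m :=
        (Real.rpow_inv_natCast_pow hA.det_nonneg Fintype.card_ne_zero).symm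
    _ ≤ _ := pow_le_pow_left₀ (Real.rpow_nonneg hA.det_nonneg _) amgm _

/-- **Determinant–trace inequality.**
Let `X₁, …, Xₙ` be vectors in `ℝ^d` with `‖Xᵢ‖₂ ≤ L` for all `i`, and let `λ > 0`.
With `Γ := λ I + ∑ᵢ Xᵢ Xᵢᵀ`, we have `det Γ ≤ (λ + n L² / d)^d`. -/
theorem stmt_1 {d n : ℕ} (hd : 0 < d) (L lam : ℝ) (hlam : 0 < lam)
    (X : Fin n → (Fin d → ℝ))
    (hX : ∀ i, Real.sqrt (X i ⬝ᵥ X i) ≤ L)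
    (Γ : Matrix (Fin d) (Fin d) ℝ)
    (hΓ : Γ = lam • (1 : Matrix (Fin d) (Fin d) ℝ) +
      ∑ i : Fin n, vecMulVec (X i) (X i)) :
    Γ.det ≤ (lam + n * L ^ 2 / d) ^ d := by
  have : Nonempty (Fin d) := ⟨⟨0, hd⟩⟩
  have hpsd : Γ.PosSemidef := by
    rw [hΓ]
    refine (PosSemidef.one.smul hlam.le).add (posSemidef_sum _ fun i _ => ?_)
    simpa using posSemidef_vecMulVec_self_star (X i)
  have hsq : ∀ i, X i ⬝ᵥ X i ≤ L ^ 2 := fun i => (Real.sqrt_le_iff.mp (hX i)).2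
  have htrace : Γ.trace ≤ lam * d + n * L ^ 2 := by
    have hsum : ∑ i, X i ⬝ᵥ X i ≤ n * L ^ 2 := by
      simpa using sum_le_sum fun i (_ : i ∈ univ) => hsq i
    simpa [hΓ, trace_sum, trace_vecMulVec] using hsum
  have hd' : (0 : ℝ) < d := by exact_mod_cast hd
  have hdet := hpsd.det_le_trace_div_card_pow
  rw [Fintype.card_fin] at hdet
  refine hdet.trans (pow_le_pow_left₀ (div_nonneg hpsd.trace_nonneg hd'.le) ?_ _)
  rw [div_le_iff₀ hd', add_mul, div_mul_cancel₀ _ hd'.ne']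
  exact htrace
end

section
/- Let {F_t}_{t=1}^T be a filtration and {(Z_t, ζ_t)}_{t=1}^T a stochastic process with Z_t ∈ ℝ^d and ζ_t ∈ ℝ such that: (1) (Z_t, ζ_t) is F_t-measurable; (2) |ζ_t| ≤ M almost surely for all t ∈ [T]; (3) Z_t and ζ_t are conditionally independent given F_t; (4) E[Z_t | F_t] = 0; and (5) for every x ∈ ℝ^d, the conditional law of ⟨x, Z_t⟩ given F_t equals the conditional law of −⟨x, Z_t⟩ given F_t (Z_t is conditionally symmetric). Let Σ := Σ_{t=1}^T Z_t Z_tᵀ. Then for any positive definite d×d matrix Q and any δ ∈ (0,1), the probability that ‖Σ_{t=1}^T Z_t ζ_t‖²_{(Q + M²Σ)⁻¹} ≥ 2 log((1/δ)·√(det(Q + M²Σ)/det(Q))) is at most δ. -/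
open MeasureTheory ProbabilityTheory Matrix Finset

section CondSymm

variable {Ω : Type*} {m m0 : MeasurableSpace Ω} [StandardBorelSpace Ω]
  {μ : Measure Ω} [IsProbabilityMeasure μ] {hm : m ≤ m0} {U ζ : Ω → ℝ} {M : ℝ}

/-- If `U` is conditionally symmetric given `m` and conditionally independent of `ζ` given `m`,
then on every `m`-measurable set the joint law of `(U, ζ)` is invariant under `U ↦ -U`. -/
lemma map_restrict_neg_prodMk_of_condIndepFun (hU : Measurable U) (hζ : Measurable ζ)
    (hind : CondIndepFun m hm U ζ μ)
    (hsym : ∀ g : ℝ → ℝ, Measurable g → (∃ C, ∀ y, |g y| ≤ C) →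
      μ[(fun ω => g (U ω)) | m] =ᵐ[μ] μ[(fun ω => g (-(U ω))) | m])
    {A : Set Ω} (hA : MeasurableSet[m] A) :
    (μ.restrict A).map (fun ω => (U ω, ζ ω)) = (μ.restrict A).map (fun ω => (-U ω, ζ ω)) := by
  rw [condIndepFun_iff_condExp_inter_preimage_eq_mul hU hζ] at hind
  have hkey : ∀ B : Set ℝ, MeasurableSet B →
      (μ⟦U ⁻¹' B | m⟧) =ᵐ[μ] (μ⟦U ⁻¹' (Neg.neg ⁻¹' B) | m⟧) := fun B hB =>
    hsym (B.indicator fun _ => 1) (measurable_const.indicator hB)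
      ⟨1, fun y => by by_cases h : y ∈ B <;> simp [h]⟩
  have hint : ∀ B C : Set ℝ, MeasurableSet B → MeasurableSet C →
      μ.real ((U ⁻¹' B ∩ ζ ⁻¹' C) ∩ A) =
        ∫ ω in A, (μ⟦U ⁻¹' B | m⟧) ω * (μ⟦ζ ⁻¹' C | m⟧) ω ∂μ := fun B C hB hC => by
    have hBC : MeasurableSet (U ⁻¹' B ∩ ζ ⁻¹' C) := (hU hB).inter (hζ hC)
    rw [← integral_congr_ae (ae_restrict_of_ae (hind B C hB hC)),
      setIntegral_condExp hm ((integrable_const 1).indicator hBC) hA, integral_indicator hBC]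
    simp [measureReal_def, Measure.restrict_apply hBC]
  refine Measure.ext_prod fun {B C} hB hC => ?_
  have hUζ : Measurable fun ω => (-U ω, ζ ω) := hU.neg.prodMk hζ
  rw [Measure.map_apply (hU.prodMk hζ) (hB.prod hC),
    Measure.map_apply hUζ (hB.prod hC),
    Measure.restrict_apply (hU.prodMk hζ (hB.prod hC)),
    Measure.restrict_apply (hUζ (hB.prod hC)),
    ← measureReal_eq_measureReal_iff]
  refine (hint B C hB hC).trans (Eq.trans ?_ (hint _ C (measurable_neg hB) hC).symm)
  refine integral_congr_ae (ae_restrict_of_ae ?_)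
  filter_upwards [hkey B hB] with ω h
  rw [h]

/-- A symmetrized pair of sub-Gaussian exponential increments is at most two. -/
lemma exp_add_exp_neg_le_two {u z : ℝ} (hz : |z| ≤ M) :
    Real.exp (u * z - M ^ 2 * u ^ 2 / 2) + Real.exp (-u * z - M ^ 2 * u ^ 2 / 2) ≤ 2 := by
  have hcosh := Real.cosh_le_exp_half_sq (u * z)
  have hsq : z ^ 2 ≤ M ^ 2 := sq_le_sq' (neg_le_of_abs_le hz) (le_of_abs_le hz)
  calc _ = 2 * (Real.cosh (u * z) * Real.exp (-(M ^ 2 * u ^ 2 / 2))) := by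
        rw [Real.cosh_eq, sub_eq_add_neg, sub_eq_add_neg, Real.exp_add, Real.exp_add, neg_mul]
        ring
    _ ≤ 2 * (Real.exp ((u * z) ^ 2 / 2) * Real.exp (-(M ^ 2 * u ^ 2 / 2))) := by gcongr
    _ ≤ 2 * 1 := by
        rw [← Real.exp_add]
        gcongr
        rw [Real.exp_le_one_iff]
        nlinarith [mul_le_mul_of_nonneg_right hsq (sq_nonneg u)]
    _ = 2 := by norm_num

lemma setLIntegral_exp_increment_le (hU : Measurable U) (hζ : Measurable ζ)
    (hbd : ∀ᵐ ω ∂μ, |ζ ω| ≤ M) (hind : CondIndepFun m hm U ζ μ)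
    (hsym : ∀ g : ℝ → ℝ, Measurable g → (∃ C, ∀ y, |g y| ≤ C) →
      μ[(fun ω => g (U ω)) | m] =ᵐ[μ] μ[(fun ω => g (-(U ω))) | m])
    {A : Set Ω} (hA : MeasurableSet[m] A) :
    ∫⁻ ω in A, ENNReal.ofReal (Real.exp (U ω * ζ ω - M ^ 2 * U ω ^ 2 / 2)) ∂μ ≤ μ A := by
  set h : ℝ × ℝ → ENNReal :=
    fun p => ENNReal.ofReal (Real.exp (p.1 * p.2 - M ^ 2 * p.1 ^ 2 / 2)) with hh
  have hmeas : Measurable h := by fun_prop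
  have heq : ∫⁻ ω in A, h (U ω, ζ ω) ∂μ = ∫⁻ ω in A, h (-U ω, ζ ω) ∂μ := by
    rw [← lintegral_map hmeas (hU.prodMk hζ),
      map_restrict_neg_prodMk_of_condIndepFun hU hζ hind hsym hA,
      lintegral_map hmeas (by fun_prop)]
  have hsum : 2 * ∫⁻ ω in A, h (U ω, ζ ω) ∂μ ≤ 2 * μ A := by
    calc 2 * ∫⁻ ω in A, h (U ω, ζ ω) ∂μ
        = ∫⁻ ω in A, (h (U ω, ζ ω) + h (-U ω, ζ ω)) ∂μ := by
          rw [lintegral_add_left (by fun_prop), ← heq, two_mul]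
      _ ≤ ∫⁻ _ in A, 2 ∂μ := by
          refine lintegral_mono_ae (ae_restrict_of_ae ?_)
          filter_upwards [hbd] with ω hω
          rw [hh, ← ENNReal.ofReal_add (Real.exp_nonneg _) (Real.exp_nonneg _)]
          refine ENNReal.ofReal_le_of_le_toReal ?_
          simpa using exp_add_exp_neg_le_two (u := U ω) hω
      _ = 2 * μ A := by simp
  exact (ENNReal.mul_le_mul_iff_right (by simp) (by simp)).1 hsum

lemma lintegral_mul_exp_increment_le (hU : Measurable U) (hζ : Measurable ζ)
    (hbd : ∀ᵐ ω ∂μ, |ζ ω| ≤ M) (hind : CondIndepFun m hm U ζ μ)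
    (hsym : ∀ g : ℝ → ℝ, Measurable g → (∃ C, ∀ y, |g y| ≤ C) →
      μ[(fun ω => g (U ω)) | m] =ᵐ[μ] μ[(fun ω => g (-(U ω))) | m])
    {D : Ω → ENNReal} (hD : Measurable[m] D) :
    ∫⁻ ω, ENNReal.ofReal (Real.exp (U ω * ζ ω - M ^ 2 * U ω ^ 2 / 2)) * D ω ∂μ ≤
      ∫⁻ ω, D ω ∂μ := by
  set h : Ω → ENNReal :=
    fun ω => ENNReal.ofReal (Real.exp (U ω * ζ ω - M ^ 2 * U ω ^ 2 / 2))
  have hmeas : Measurable h := by fun_prop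
  have hle : (μ.withDensity h).trim hm ≤ μ.trim hm := by
    refine Measure.le_iff.2 fun A hA => ?_
    rw [trim_measurableSet_eq hm hA, trim_measurableSet_eq hm hA, withDensity_apply _ (hm A hA)]
    exact setLIntegral_exp_increment_le hU hζ hbd hind hsym hA
  calc ∫⁻ ω, h ω * D ω ∂μ = ∫⁻ ω, D ω ∂(μ.withDensity h) :=
        (lintegral_withDensity_eq_lintegral_mul μ hmeas (hD.mono hm le_rfl)).symm
    _ = ∫⁻ ω, D ω ∂((μ.withDensity h).trim hm) := (lintegral_trim hm hD).symm
    _ ≤ ∫⁻ ω, D ω ∂(μ.trim hm) := lintegral_mono' hle le_rfl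
    _ = ∫⁻ ω, D ω ∂μ := lintegral_trim hm hD

end CondSymm

section Gaussian

variable {d : ℕ}

lemma lintegral_exp_neg_half_dotProduct_self_ne_top :
    ∫⁻ x : Fin d → ℝ, ENNReal.ofReal (Real.exp (-(x ⬝ᵥ x) / 2)) ≠ ⊤ := by
  have hint : Integrable (fun x : Fin d → ℝ => ∏ i, Real.exp (-(1 / 2) * x i ^ 2)) :=
    Integrable.fintype_prod fun _ => integrable_exp_neg_mul_sq (by norm_num)
  convert hint.lintegral_lt_top.ne using 5 with x
  rw [← Real.exp_sum, ← Finset.mul_sum, dotProduct]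
  congr 1
  simp_rw [pow_two]
  ring

lemma lintegral_exp_neg_half_dotProduct_self_ne_zero :
    ∫⁻ x : Fin d → ℝ, ENNReal.ofReal (Real.exp (-(x ⬝ᵥ x) / 2)) ≠ 0 := by
  have hmeas : Measurable fun x : Fin d → ℝ => ENNReal.ofReal (Real.exp (-(x ⬝ᵥ x) / 2)) := by
    unfold dotProduct; fun_prop
  rw [← pos_iff_ne_zero, lintegral_pos_iff_support hmeas]
  simp [Function.support, Real.exp_pos, not_le, NeZero.ne]

/-- The Gaussian integral with precision matrix `V`, in terms of the standard one. -/
lemma Matrix.PosDef.lintegral_exp_neg_half {V : Matrix (Fin d) (Fin d) ℝ} (hV : V.PosDef) :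
    ∫⁻ x : Fin d → ℝ, ENNReal.ofReal (Real.exp (-(x ⬝ᵥ V *ᵥ x) / 2)) =
      ENNReal.ofReal (√V.det)⁻¹ *
        ∫⁻ x : Fin d → ℝ, ENNReal.ofReal (Real.exp (-(x ⬝ᵥ x) / 2)) := by
  obtain ⟨B, rfl⟩ : ∃ B : Matrix (Fin d) (Fin d) ℝ, V = Bᴴ * B := by
    open scoped MatrixOrder in
    exact CStarAlgebra.nonneg_iff_eq_star_mul_self.mp hV.posSemidef.nonneg
  have hdet : (Bᴴ * B).det = B.det ^ 2 := by simp [pow_two]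
  have hB : B.det ≠ 0 := fun h => hV.det_pos.ne' (by simp [h])
  have hmeas : Measurable fun x : Fin d → ℝ => ENNReal.ofReal (Real.exp (-(x ⬝ᵥ x) / 2)) := by
    unfold dotProduct; fun_prop
  rw [hdet, Real.sqrt_sq_eq_abs, ← abs_inv, ← smul_eq_mul (ENNReal.ofReal _), ← lintegral_smul_measure,
    ← Real.map_matrix_volume_pi_eq_smul_volume_pi hB, lintegral_map hmeas (by fun_prop)]
  simp_rw [toLin'_apply, dotProduct_mulVec, ← vecMul_vecMul, conjTranspose_eq_transpose_of_trivial,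
    vecMul_transpose]

lemma Matrix.PosDef.dotProduct_sub_half_quadratic {V : Matrix (Fin d) (Fin d) ℝ} (hV : V.PosDef)
    (S x : Fin d → ℝ) :
    x ⬝ᵥ S - (x ⬝ᵥ V *ᵥ x) / 2 =
      (S ⬝ᵥ V⁻¹ *ᵥ S) / 2 + -((x - V⁻¹ *ᵥ S) ⬝ᵥ V *ᵥ (x - V⁻¹ *ᵥ S)) / 2 := by
  have hdet : IsUnit V.det := hV.det_pos.ne'.isUnit
  have h1 : V *ᵥ (V⁻¹ *ᵥ S) = S := by rw [mulVec_mulVec, mul_nonsing_inv _ hdet, one_mulVec]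
  have h2 : (V⁻¹ *ᵥ S) ⬝ᵥ V *ᵥ x = x ⬝ᵥ S := by
    have hT : Vᵀ = V := by simpa using hV.isHermitian.eq
    rw [dotProduct_mulVec, ← mulVec_transpose, hT, h1, dotProduct_comm]
  rw [mulVec_sub, h1, sub_dotProduct, dotProduct_sub, dotProduct_sub, h2,
    dotProduct_comm (V⁻¹ *ᵥ S) S]
  ring

lemma Matrix.PosDef.lintegral_exp_dotProduct_sub_half {V : Matrix (Fin d) (Fin d) ℝ}
    (hV : V.PosDef) (S : Fin d → ℝ) :
    ∫⁻ x : Fin d → ℝ, ENNReal.ofReal (Real.exp (x ⬝ᵥ S - (x ⬝ᵥ V *ᵥ x) / 2)) =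
      ENNReal.ofReal (Real.exp ((S ⬝ᵥ V⁻¹ *ᵥ S) / 2) * (√V.det)⁻¹) *
        ∫⁻ x : Fin d → ℝ, ENNReal.ofReal (Real.exp (-(x ⬝ᵥ x) / 2)) := by
  simp_rw [hV.dotProduct_sub_half_quadratic S, Real.exp_add, ENNReal.ofReal_mul (Real.exp_nonneg _)]
  rw [lintegral_const_mul' _ _ ENNReal.ofReal_ne_top,
    lintegral_sub_right_eq_self
      (fun x : Fin d → ℝ => ENNReal.ofReal (Real.exp (-(x ⬝ᵥ V *ᵥ x) / 2))) (V⁻¹ *ᵥ S),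
    hV.lintegral_exp_neg_half, mul_assoc]

end Gaussian

/-- The mixture argument: if the exponential process of each direction `x` has mean at most one,
then the self-normalized tail bound holds. -/
lemma measure_log_det_le_quadratic_le {Ω : Type*} {m0 : MeasurableSpace Ω} {d : ℕ} {μ : Measure Ω}
    [IsProbabilityMeasure μ] {S : Ω → Fin d → ℝ} {W : Ω → Matrix (Fin d) (Fin d) ℝ}
    (hS : Measurable S) (hW : ∀ i j, Measurable fun ω => W ω i j) (hWpos : ∀ ω, (W ω).PosSemidef)
    (hexp : ∀ x : Fin d → ℝ,
      ∫⁻ ω, ENNReal.ofReal (Real.exp (x ⬝ᵥ S ω - (x ⬝ᵥ W ω *ᵥ x) / 2)) ∂μ ≤ 1)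
    {Q : Matrix (Fin d) (Fin d) ℝ} (hQ : Q.PosDef) {δ : ℝ} (hδ : 0 < δ) :
    μ {ω | 2 * Real.log ((1 / δ) * √((Q + W ω).det / Q.det)) ≤
      S ω ⬝ᵥ (Q + W ω)⁻¹ *ᵥ S ω} ≤ ENNReal.ofReal δ := by
  have hV : ∀ ω, (Q + W ω).PosDef := fun ω => hQ.add_posSemidef (hWpos ω)
  set c := ∫⁻ x : Fin d → ℝ, ENNReal.ofReal (Real.exp (-(x ⬝ᵥ x) / 2)) with hc
  set G : Ω → ENNReal := fun ω => ∫⁻ x : Fin d → ℝ,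
    ENNReal.ofReal (Real.exp (x ⬝ᵥ S ω - (x ⬝ᵥ (Q + W ω) *ᵥ x) / 2)) with hG
  set K := ENNReal.ofReal (√Q.det)⁻¹ * c with hK
  have hjoint : Measurable fun p : Ω × (Fin d → ℝ) =>
      ENNReal.ofReal (Real.exp (p.2 ⬝ᵥ S p.1 - (p.2 ⬝ᵥ (Q + W p.1) *ᵥ p.2) / 2)) := by
    simp only [dotProduct, mulVec, Matrix.add_apply]
    fun_prop
  have hGint : ∫⁻ ω, G ω ∂μ ≤ K := by
    rw [hG, lintegral_lintegral_swap hjoint.aemeasurable, hK, hc, ← hQ.lintegral_exp_neg_half]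
    refine lintegral_mono fun x => ?_
    calc _ = ∫⁻ ω, ENNReal.ofReal (Real.exp (-(x ⬝ᵥ Q *ᵥ x) / 2)) *
          ENNReal.ofReal (Real.exp (x ⬝ᵥ S ω - (x ⬝ᵥ W ω *ᵥ x) / 2)) ∂μ := by
          refine lintegral_congr fun ω => ?_
          rw [← ENNReal.ofReal_mul (Real.exp_nonneg _), ← Real.exp_add, add_mulVec,
            dotProduct_add]
          ring_nf
      _ ≤ ENNReal.ofReal (Real.exp (-(x ⬝ᵥ Q *ᵥ x) / 2)) * 1 := by
          rw [lintegral_const_mul' _ _ ENNReal.ofReal_ne_top]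
          gcongr
          exact hexp x
      _ = _ := mul_one _
  have hK0 : K ≠ 0 := mul_ne_zero
    (ENNReal.ofReal_pos.2 (inv_pos.2 (Real.sqrt_pos.2 hQ.det_pos))).ne'
    lintegral_exp_neg_half_dotProduct_self_ne_zero
  have hKtop : K ≠ ⊤ :=
    ENNReal.mul_ne_top ENNReal.ofReal_ne_top lintegral_exp_neg_half_dotProduct_self_ne_top
  have hsub : {ω | 2 * Real.log ((1 / δ) * √((Q + W ω).det / Q.det)) ≤
      S ω ⬝ᵥ (Q + W ω)⁻¹ *ᵥ S ω} ⊆ {ω | ENNReal.ofReal δ⁻¹ * K ≤ G ω} := fun ω hω => by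
    have hVs : 0 < √(Q + W ω).det := Real.sqrt_pos.2 (hV ω).det_pos
    have hQs : 0 < √Q.det := Real.sqrt_pos.2 hQ.det_pos
    rw [Set.mem_ofPred_eq, Real.sqrt_div (hV ω).det_pos.le] at hω
    have hle : 1 / δ * (√(Q + W ω).det / √Q.det) ≤
        Real.exp ((S ω ⬝ᵥ (Q + W ω)⁻¹ *ᵥ S ω) / 2) := by
      rw [← Real.log_le_iff_le_exp (by positivity)]
      linarith
    rw [Set.mem_ofPred_eq, hG]
    simp only
    rw [(hV ω).lintegral_exp_dotProduct_sub_half, hK, ← mul_assoc,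
      ← ENNReal.ofReal_mul (inv_nonneg.2 hδ.le)]
    refine mul_le_mul_left (ENNReal.ofReal_le_ofReal ?_) c
    calc δ⁻¹ * (√Q.det)⁻¹
        = 1 / δ * (√(Q + W ω).det / √Q.det) * (√(Q + W ω).det)⁻¹ := by field_simp
      _ ≤ _ := by gcongr
  have hmarkov := (mul_meas_ge_le_lintegral hjoint.lintegral_prod_right'
    (μ := μ) (ENNReal.ofReal δ⁻¹ * K)).trans hGint
  refine (measure_mono hsub).trans ?_
  rw [mul_right_comm] at hmarkov
  have hone := (ENNReal.mul_le_mul_iff_left hK0 hKtop).1 (hmarkov.trans_eq (one_mul K).symm)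
  calc μ {ω | ENNReal.ofReal δ⁻¹ * K ≤ G ω}
      = ENNReal.ofReal δ * (ENNReal.ofReal δ⁻¹ * μ {ω | ENNReal.ofReal δ⁻¹ * K ≤ G ω}) := by
        rw [← mul_assoc (ENNReal.ofReal δ), ← ENNReal.ofReal_mul hδ.le, mul_inv_cancel₀ hδ.ne',
          ENNReal.ofReal_one, one_mul]
    _ ≤ ENNReal.ofReal δ * 1 := by gcongr
    _ = ENNReal.ofReal δ := mul_one _

lemma lintegral_exp_sum_increments_le_one {Ω : Type*} {m0 : MeasurableSpace Ω}
    [StandardBorelSpace Ω] {μ : Measure Ω} [IsProbabilityMeasure μ] (ℱ : Filtration ℕ m0)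
    {M : ℝ} {U ζ : ℕ → Ω → ℝ}
    (hU : ∀ t, Measurable[ℱ (t + 1)] (U t)) (hζ : ∀ t, Measurable[ℱ (t + 1)] (ζ t))
    (hbd : ∀ t, ∀ᵐ ω ∂μ, |ζ t ω| ≤ M)
    (hind : ∀ t, CondIndepFun (ℱ t) (ℱ.le t) (U t) (ζ t) μ)
    (hsym : ∀ t, ∀ g : ℝ → ℝ, Measurable g → (∃ C, ∀ y, |g y| ≤ C) →
      μ[(fun ω => g (U t ω)) | ℱ t] =ᵐ[μ] μ[(fun ω => g (-(U t ω))) | ℱ t])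
    (n : ℕ) :
    ∫⁻ ω, ENNReal.ofReal (Real.exp (∑ t ∈ Finset.range n,
      (U t ω * ζ t ω - M ^ 2 * U t ω ^ 2 / 2))) ∂μ ≤ 1 := by
  induction n with
  | zero => simp
  | succ n ih =>
    have hmeas : Measurable[ℱ n] fun ω => ENNReal.ofReal (Real.exp (∑ t ∈ Finset.range n,
        (U t ω * ζ t ω - M ^ 2 * U t ω ^ 2 / 2))) := by
      refine ENNReal.measurable_ofReal.comp (Real.measurable_exp.comp
        (Finset.measurable_fun_sum _ fun t ht => ?_))
      have hle : ℱ (t + 1) ≤ ℱ n := ℱ.mono (Finset.mem_range.1 ht)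
      have hUn := (hU t).mono hle le_rfl
      have hζn := (hζ t).mono hle le_rfl
      exact (hUn.mul hζn).sub (((hUn.pow_const 2).const_mul _).div_const 2)
    simp_rw [Finset.sum_range_succ_comm, Real.exp_add, ENNReal.ofReal_mul (Real.exp_nonneg _)]
    exact (lintegral_mul_exp_increment_le ((hU n).mono (ℱ.le _) le_rfl)
      ((hζ n).mono (ℱ.le _) le_rfl) (hbd n) (hind n) (hsym n) hmeas).trans ih

lemma measurable_dotProduct_left {d : ℕ} (x : Fin d → ℝ) :
    Measurable fun z : Fin d → ℝ => x ⬝ᵥ z := by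
  unfold dotProduct
  fun_prop

/-- **Symmetric self-normalized inequality (Lemma: self_normalized_symmetric).**
Let `{F_t}` be a filtration and `(Z_t, ζ_t)` a process with `Z_t ∈ ℝ^d`, `ζ_t ∈ ℝ`, each
realized by time `t+1`, such that `|ζ_t| ≤ M` a.s., `Z_t ⟂ ζ_t | F_t`, `E[Z_t | F_t] = 0`,
and `Z_t` is conditionally symmetric given `F_t` (the conditional law of `⟨x, Z_t⟩` equals
that of `−⟨x, Z_t⟩`, encoded via bounded measurable test functions).  With
`Σ = ∑_{t=1}^T Z_t Z_tᵀ`, for any positive definite `Q` and `δ ∈ (0,1)`,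
`P[ ‖∑_t Z_t ζ_t‖²_{(Q+M²Σ)⁻¹} ≥ 2 log((1/δ)√(det(Q+M²Σ)/det Q)) ] ≤ δ`. -/
theorem stmt_2 {Ω : Type*} {m0 : MeasurableSpace Ω} [StandardBorelSpace Ω] [Nonempty Ω]
    (μ : Measure Ω) [IsProbabilityMeasure μ]
    (ℱ : Filtration ℕ m0)
    {d T : ℕ} (M : ℝ) (hM : 0 ≤ M)
    (Z : ℕ → Ω → (Fin d → ℝ)) (ζ : ℕ → Ω → ℝ)
    (hZadapted : ∀ t, Measurable[ℱ (t + 1)] (Z t))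
    (hζadapted : ∀ t, Measurable[ℱ (t + 1)] (ζ t))
    (hζbd : ∀ t, ∀ᵐ ω ∂μ, |ζ t ω| ≤ M)
    (hindep : ∀ t, CondIndepFun (ℱ t) (ℱ.le t) (Z t) (ζ t) μ)
    (hcent : ∀ t, μ[Z t | ℱ t] =ᵐ[μ] 0)
    (hsym : ∀ t, ∀ x : Fin d → ℝ, ∀ g : ℝ → ℝ, Measurable g → (∃ C, ∀ y, |g y| ≤ C) →
      μ[(fun ω => g (x ⬝ᵥ Z t ω)) | ℱ t] =ᵐ[μ] μ[(fun ω => g (-(x ⬝ᵥ Z t ω))) | ℱ t])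
    (Q : Matrix (Fin d) (Fin d) ℝ) (hQ : Q.PosDef)
    (δ : ℝ) (hδ : 0 < δ) (hδ1 : δ < 1) :
    μ {ω |
        2 * Real.log ((1 / δ) * Real.sqrt
            ((Q + M ^ 2 • ∑ t ∈ Finset.range T, vecMulVec (Z t ω) (Z t ω)).det / Q.det)) ≤
          (∑ t ∈ Finset.range T, ζ t ω • Z t ω) ⬝ᵥ
            (Q + M ^ 2 • ∑ t ∈ Finset.range T, vecMulVec (Z t ω) (Z t ω))⁻¹.mulVec
              (∑ t ∈ Finset.range T, ζ t ω • Z t ω)} ≤ ENNReal.ofReal δ := by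
  have hZ : ∀ t, Measurable (Z t) := fun t => (hZadapted t).mono (ℱ.le _) le_rfl
  have hζ : ∀ t, Measurable (ζ t) := fun t => (hζadapted t).mono (ℱ.le _) le_rfl
  refine measure_log_det_le_quadratic_le
    (S := fun ω => ∑ t ∈ Finset.range T, ζ t ω • Z t ω)
    (W := fun ω => M ^ 2 • ∑ t ∈ Finset.range T, vecMulVec (Z t ω) (Z t ω))
    (by fun_prop) (fun i j => ?_) (fun ω => ?_) (fun x => ?_) hQ hδ
  · simp only [Matrix.smul_apply, Matrix.sum_apply, vecMulVec_apply]
    fun_prop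
  · refine PosSemidef.smul (posSemidef_sum _ fun t _ => ?_) (sq_nonneg M)
    simpa using posSemidef_vecMulVec_self_star (Z t ω)
  · refine le_trans (le_of_eq (lintegral_congr fun ω => ?_))
      (lintegral_exp_sum_increments_le_one ℱ (U := fun t ω => x ⬝ᵥ Z t ω)
        (fun t => measurable_dotProduct_left x |>.comp (hZadapted t)) hζadapted hζbd
        (fun t => (hindep t).comp (measurable_dotProduct_left x) measurable_id)
        (fun t => hsym t x) T)
    congr 2
    rw [smul_mulVec, sum_mulVec, dotProduct_smul, dotProduct_sum, dotProduct_sum,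
      Finset.sum_sub_distrib, smul_eq_mul, Finset.mul_sum, Finset.sum_div]
    congr 1
    · refine Finset.sum_congr rfl fun t _ => ?_
      rw [dotProduct_smul, smul_eq_mul, mul_comm]
    · refine Finset.sum_congr rfl fun t _ => ?_
      rw [vecMulVec_mulVec, op_smul_eq_smul, dotProduct_smul, smul_eq_mul,
        dotProduct_comm (Z t ω) x, pow_two (x ⬝ᵥ Z t ω)]
end

section
/- Let {X_i}_{i=1}^n be a sequence of vector-valued random variables in ℝ^d adapted to a filtration {F_i}_{i=1}^n with E[X_i | F_i] = 0 and ‖X_i‖₂ ≤ B almost surely for some constant B. Then for every λ ∈ ℝ^d, the process U_n(λ) := exp(λᵀ Σ_{i=1}^n X_i − λᵀ(Σ_{i=1}^n X_i X_iᵀ + E[X_i X_iᵀ | F_i])λ / 2) is a supermartingale with E[U_n(λ)] ≤ 1 for all n. -/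
open MeasureTheory ProbabilityTheory Matrix Finset

/-- Follows from `1 - t ≤ exp (-t)` at `t = y - y² / 2` and
`(1 + y + y² / 2) (1 - y + y² / 2) = 1 + y⁴ / 4`. -/
theorem exp_sub_sq_div_two_le (y : ℝ) : Real.exp (y - y ^ 2 / 2) ≤ 1 + y + y ^ 2 / 2 := by
  have hexp : 1 - (y - y ^ 2 / 2) ≤ Real.exp (-(y - y ^ 2 / 2)) := by
    linarith [Real.add_one_le_exp (-(y - y ^ 2 / 2))]
  have hpos : 0 ≤ 1 + y + y ^ 2 / 2 := by nlinarith [sq_nonneg (y + 1)]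
  have hone : 1 ≤ (1 + y + y ^ 2 / 2) * Real.exp (-(y - y ^ 2 / 2)) :=
    calc (1 : ℝ) ≤ (1 + y + y ^ 2 / 2) * (1 - (y - y ^ 2 / 2)) := by
          nlinarith [sq_nonneg (y ^ 2)]
      _ ≤ _ := mul_le_mul_of_nonneg_left hexp hpos
  rwa [Real.exp_neg, ← div_eq_mul_inv, one_le_div (Real.exp_pos _)] at hone

theorem exp_sub_sq_div_two_le_exp_half (y : ℝ) :
    Real.exp (y - y ^ 2 / 2) ≤ Real.exp (1 / 2) :=
  Real.exp_le_exp.2 (by nlinarith [sq_nonneg (y - 1)])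

/-- A square-integrable, conditionally centered `Y` satisfies
`E[exp (Y - Y² / 2) | m] ≤ exp (E[Y² | m] / 2)`. -/
theorem condExp_exp_sub_sq_div_two_le {Ω : Type*} {m m0 : MeasurableSpace Ω}
    {μ : Measure Ω} [IsProbabilityMeasure μ] (hm : m ≤ m0) {Y : Ω → ℝ}
    (hY : MemLp Y 2 μ) (hcent : μ[Y | m] =ᵐ[μ] 0) :
    μ[fun ω => Real.exp (Y ω - Y ω ^ 2 / 2) | m] ≤ᵐ[μ]
      fun ω => Real.exp ((μ[fun ω' => Y ω' ^ 2 | m]) ω / 2) := by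
  have hY1 : Integrable Y μ := hY.integrable one_le_two
  have hY2 : Integrable (fun ω => Y ω ^ 2) μ := hY.integrable_sq
  have hexp : Integrable (fun ω => Real.exp (Y ω - Y ω ^ 2 / 2)) μ := by
    refine Integrable.of_bound ?_ (Real.exp (1 / 2)) (ae_of_all _ fun ω => ?_)
    · exact Real.continuous_exp.comp_aestronglyMeasurable
        (hY1.sub (hY2.div_const 2)).aestronglyMeasurable
    · rw [Real.norm_of_nonneg (Real.exp_pos _).le]
      exact exp_sub_sq_div_two_le_exp_half _
  have hquad : Integrable ((fun _ => (1 : ℝ)) + Y + (1 / 2 : ℝ) • fun ω => Y ω ^ 2) μ :=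
    ((integrable_const _).add hY1).add (hY2.smul _)
  have hmono := condExp_mono (m := m) hexp hquad (ae_of_all _ fun ω => by
    have := exp_sub_sq_div_two_le (Y ω)
    simp only [Pi.add_apply, Pi.smul_apply, smul_eq_mul]
    linarith)
  filter_upwards [hmono, hcent, condExp_add ((integrable_const (1 : ℝ)).add hY1)
    (hY2.smul (1 / 2 : ℝ)) m, condExp_add (integrable_const (1 : ℝ)) hY1 m,
    condExp_smul (1 / 2 : ℝ) (fun ω => Y ω ^ 2) m (μ := μ)] with ω hle hzero hadd hadd' hsmul
  rw [hadd, Pi.add_apply, hadd', Pi.add_apply, hsmul, hzero, condExp_const hm] at hle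
  simp only [Pi.smul_apply, Pi.zero_apply, smul_eq_mul] at hle
  linarith [Real.add_one_le_exp ((μ[fun ω' => Y ω' ^ 2 | m]) ω / 2)]

/-- The self-normalized exponential process of the increments `Y`. -/
noncomputable def expProcess {Ω : Type*} {m0 : MeasurableSpace Ω} (μ : Measure Ω)
    (ℱ : Filtration ℕ m0) (Y : ℕ → Ω → ℝ) (n : ℕ) (ω : Ω) : ℝ :=
  Real.exp (∑ i ∈ range n, Y i ω -
    (∑ i ∈ range n, (Y i ω ^ 2 + (μ[fun ω' => Y i ω' ^ 2 | ℱ i]) ω)) / 2)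

section expProcess

variable {Ω : Type*} {m0 : MeasurableSpace Ω} {μ : Measure Ω} {ℱ : Filtration ℕ m0}
  {Y : ℕ → Ω → ℝ}

theorem expProcess_pos (n : ℕ) (ω : Ω) : 0 < expProcess μ ℱ Y n ω := Real.exp_pos _

theorem expProcess_succ (n : ℕ) (ω : Ω) :
    expProcess μ ℱ Y (n + 1) ω =
      expProcess μ ℱ Y n ω * Real.exp (-((μ[fun ω' => Y n ω' ^ 2 | ℱ n]) ω / 2)) *
        Real.exp (Y n ω - Y n ω ^ 2 / 2) := by
  simp only [expProcess, sum_range_succ, ← Real.exp_add]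
  congr 1
  ring

theorem stronglyAdapted_expProcess (hadapted : ∀ i, Measurable[ℱ (i + 1)] (Y i)) :
    StronglyAdapted ℱ (expProcess μ ℱ Y) := by
  intro n
  have hY : ∀ i ∈ range n, Measurable[ℱ n] (Y i) := fun i hi =>
    (hadapted i).mono (ℱ.mono (Finset.mem_range.1 hi)) le_rfl
  have hV : ∀ i ∈ range n, Measurable[ℱ n] (μ[fun ω' => Y i ω' ^ 2 | ℱ i]) := fun i hi =>
    stronglyMeasurable_condExp.measurable.mono (ℱ.mono (Finset.mem_range.1 hi).le) le_rfl
  refine Measurable.stronglyMeasurable (Real.measurable_exp.comp (Measurable.sub ?_ ?_))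
  · exact Finset.measurable_fun_sum _ hY
  · exact (Finset.measurable_fun_sum _ fun i hi =>
      ((hY i hi).pow_const 2).add (hV i hi)).div_const 2

theorem expProcess_le (n : ℕ) :
    ∀ᵐ ω ∂μ, expProcess μ ℱ Y n ω ≤ Real.exp (1 / 2) ^ n := by
  induction n with
  | zero => simp [expProcess]
  | succ n ih =>
    have hnonneg : 0 ≤ᵐ[μ] μ[fun ω' => Y n ω' ^ 2 | ℱ n] :=
      condExp_nonneg (ae_of_all _ fun ω => sq_nonneg _)
    filter_upwards [ih, hnonneg] with ω hω hV
    have hV' : Real.exp (-((μ[fun ω' => Y n ω' ^ 2 | ℱ n]) ω / 2)) ≤ 1 :=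
      Real.exp_le_one_iff.2 (by simp only [Pi.zero_apply] at hV; linarith)
    rw [expProcess_succ, pow_succ]
    refine mul_le_mul ?_ (exp_sub_sq_div_two_le_exp_half _) (Real.exp_pos _).le
      (pow_nonneg (Real.exp_pos _).le n)
    exact (mul_le_of_le_one_right (expProcess_pos n ω).le hV').trans hω

variable [IsProbabilityMeasure μ]

theorem integrable_expProcess (hadapted : ∀ i, Measurable[ℱ (i + 1)] (Y i)) (n : ℕ) :
    Integrable (expProcess μ ℱ Y n) μ := by
  refine Integrable.of_bound
    ((stronglyAdapted_expProcess hadapted n).mono (ℱ.le n)).aestronglyMeasurable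
    (Real.exp (1 / 2) ^ n) ?_
  filter_upwards [expProcess_le (ℱ := ℱ) (Y := Y) n] with ω hω
  rwa [Real.norm_of_nonneg (expProcess_pos n ω).le]

theorem supermartingale_expProcess (hadapted : ∀ i, Measurable[ℱ (i + 1)] (Y i))
    (hY : ∀ i, MemLp (Y i) 2 μ) (hcent : ∀ i, μ[Y i | ℱ i] =ᵐ[μ] 0) :
    Supermartingale (expProcess μ ℱ Y) ℱ μ := by
  refine supermartingale_nat (stronglyAdapted_expProcess hadapted)
    (integrable_expProcess hadapted) fun n => ?_
  let W : Ω → ℝ := fun ω =>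
    expProcess μ ℱ Y n ω * Real.exp (-((μ[fun ω' => Y n ω' ^ 2 | ℱ n]) ω / 2))
  let Z : Ω → ℝ := fun ω => Real.exp (Y n ω - Y n ω ^ 2 / 2)
  have hW : StronglyMeasurable[ℱ n] W :=
    (stronglyAdapted_expProcess hadapted n).mul (Real.continuous_exp.comp_stronglyMeasurable
      (stronglyMeasurable_condExp.measurable.div_const 2).neg.stronglyMeasurable)
  have hsucc : expProcess μ ℱ Y (n + 1) = W * Z := funext fun ω => expProcess_succ n ω
  have hWZ : Integrable (W * Z) μ := hsucc ▸ integrable_expProcess hadapted (n + 1)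
  have hZ : Integrable Z μ := by
    have hYn : Measurable (Y n) := (hadapted n).mono (ℱ.le _) le_rfl
    refine Integrable.of_bound (by fun_prop) (Real.exp (1 / 2)) (ae_of_all _ fun ω => ?_)
    rw [Real.norm_of_nonneg (Real.exp_pos _).le]
    exact exp_sub_sq_div_two_le_exp_half _
  rw [hsucc]
  filter_upwards [condExp_mul_of_stronglyMeasurable_left hW hWZ hZ,
    condExp_exp_sub_sq_div_two_le (ℱ.le n) (hY n) (hcent n)] with ω hpull hle
  rw [hpull, Pi.mul_apply]
  calc W ω * (μ[Z | ℱ n]) ω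
      ≤ W ω * Real.exp ((μ[fun ω' => Y n ω' ^ 2 | ℱ n]) ω / 2) :=
        mul_le_mul_of_nonneg_left hle (mul_pos (expProcess_pos n ω) (Real.exp_pos _)).le
    _ = expProcess μ ℱ Y n ω := by
        simp only [W]
        rw [mul_assoc, ← Real.exp_add, neg_add_cancel, Real.exp_zero, mul_one]

theorem integral_expProcess_le_one (hadapted : ∀ i, Measurable[ℱ (i + 1)] (Y i))
    (hY : ∀ i, MemLp (Y i) 2 μ) (hcent : ∀ i, μ[Y i | ℱ i] =ᵐ[μ] 0) (n : ℕ) :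
    ∫ ω, expProcess μ ℱ Y n ω ∂μ ≤ 1 := by
  have h := (supermartingale_expProcess hadapted hY hcent).setIntegral_le (Nat.zero_le n)
    MeasurableSet.univ
  simpa [expProcess] using h

end expProcess

theorem norm_le_sqrt_dotProduct_self {ι : Type*} [Fintype ι] (x : ι → ℝ) :
    ‖x‖ ≤ Real.sqrt (x ⬝ᵥ x) := by
  refine (pi_norm_le_iff_of_nonneg (Real.sqrt_nonneg _)).2 fun j => Real.abs_le_sqrt ?_
  rw [sq]
  exact single_le_sum (f := fun i => x i * x i) (fun i _ => mul_self_nonneg (x i)) (mem_univ j)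

/-- **Lemma 7 of de la Peña et al.: the exponentiated process is a supermartingale.**
Let `X₁, X₂, …` be conditionally centered random vectors in `ℝ^d` adapted to a filtration
`{F_i}` (each `X_i` is realized by time `i+1`, with `E[X_i | F_i] = 0`) and `‖X_i‖₂ ≤ B`
a.s.  Then for every `l ∈ ℝ^d` the process
`U_n(l) = exp(lᵀ ∑_{i<n} X_i − lᵀ(∑_{i<n} X_i X_iᵀ + E[X_i X_iᵀ | F_i]) l / 2)`
(whose quadratic form is written below as `∑_{i<n} ((⟨l,X_i⟩)² + E[(⟨l,X_i⟩)² | F_i])`)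
is a supermartingale with `E[U_n(l)] ≤ 1` for all `n`. -/
theorem stmt_4 {Ω : Type*} {m0 : MeasurableSpace Ω}
    (μ : Measure Ω) [IsProbabilityMeasure μ]
    (ℱ : Filtration ℕ m0)
    {d : ℕ} (B : ℝ) (hB : 0 ≤ B)
    (X : ℕ → Ω → (Fin d → ℝ))
    (hadapted : ∀ i, Measurable[ℱ (i + 1)] (X i))
    (hbdd : ∀ i, ∀ᵐ ω ∂μ, Real.sqrt (X i ω ⬝ᵥ X i ω) ≤ B)
    (hcent : ∀ i, μ[X i | ℱ i] =ᵐ[μ] 0)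
    (l : Fin d → ℝ)
    (U : ℕ → Ω → ℝ)
    (hU : ∀ n ω, U n ω =
      Real.exp (l ⬝ᵥ (∑ i ∈ Finset.range n, X i ω) -
        (∑ i ∈ Finset.range n,
          ((l ⬝ᵥ X i ω) ^ 2 + (μ[(fun ω' => (l ⬝ᵥ X i ω') ^ 2) | ℱ i]) ω)) / 2)) :
    Supermartingale U ℱ μ ∧ ∀ n, ∫ ω, U n ω ∂μ ≤ 1 := by
  let L : (Fin d → ℝ) →L[ℝ] ℝ := LinearMap.toContinuousLinearMap (dotProductBilin ℝ ℝ l)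
  have hL : ∀ x, L x = l ⬝ᵥ x := fun _ => rfl
  let Y : ℕ → Ω → ℝ := fun i ω => l ⬝ᵥ X i ω
  have hXtop : ∀ i, MemLp (X i) ⊤ μ := fun i =>
    memLp_top_of_bound ((hadapted i).mono (ℱ.le _) le_rfl).aestronglyMeasurable B <| by
      filter_upwards [hbdd i] with ω hω using (norm_le_sqrt_dotProduct_self _).trans hω
  have hYadapted : ∀ i, Measurable[ℱ (i + 1)] (Y i) := fun i =>
    L.continuous.measurable.comp (hadapted i)
  have hY : ∀ i, MemLp (Y i) 2 μ := fun i => L.comp_memLp' ((hXtop i).mono_exponent le_top)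
  have hYcent : ∀ i, μ[Y i | ℱ i] =ᵐ[μ] 0 := fun i => by
    filter_upwards [L.comp_condExp_comm (m := ℱ i) ((hXtop i).integrable le_top), hcent i]
      with ω hcomm hzero
    exact hcomm.symm.trans (by simp [hzero])
  obtain rfl : U = expProcess μ ℱ Y := by
    ext n ω
    rw [hU, expProcess, ← hL, map_sum]
    rfl
  exact ⟨supermartingale_expProcess hYadapted hY hYcent,
    integral_expProcess_le_one hYadapted hY hYcent⟩
end

section
/- Let X₁,…,X_n be random vectors in ℝ^d adapted to a filtration {F_t}_{t=1}^n with E[X_i | F_i] = 0 and ‖X_i‖₂ ≤ 1 almost surely. Define Σ̂ := Σ_{i=1}^n X_i X_iᵀ and Σ := Σ_{i=1}^n E[X_i X_iᵀ | F_i]. Then for any δ ∈ (0,1), with probability at least 1 − δ, the inequality vᵀ Σ v ≤ 2 vᵀ Σ̂ v + 9d·log(9n) + 8·log(2/δ) holds simultaneously for all unit vectors v ∈ ℝ^d. -/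
open MeasureTheory ProbabilityTheory Matrix Finset

/-- Pointwise bound behind the exponential supermartingale. -/
lemma exp_neg_le_one_sub_half {y : ℝ} (h0 : 0 ≤ y) (h1 : y ≤ 1) :
    Real.exp (-y) ≤ 1 - y / 2 := by
  have hexp : 1 + y + y ^ 2 / 2 ≤ Real.exp y := Real.quadratic_le_exp_of_nonneg h0
  have hpos := Real.exp_pos (-y)
  have hmul : Real.exp (-y) * Real.exp y = 1 := by rw [← Real.exp_add]; simp
  have hb : 1 ≤ (1 - y / 2) * (1 + y + y ^ 2 / 2) := by
    nlinarith [mul_nonneg h0 (sub_nonneg.2 h1), mul_nonneg (mul_nonneg h0 h0) (sub_nonneg.2 h1)]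
  have hc : 1 ≤ (1 - y / 2) * Real.exp y :=
    hb.trans (mul_le_mul_of_nonneg_left hexp (by linarith))
  nlinarith [mul_le_mul_of_nonneg_left hc hpos.le]

section Probability

variable {Ω : Type*} {m0 : MeasurableSpace Ω} {μ : Measure Ω}

lemma condExp_mem_Icc_of_ae_mem_Icc [IsFiniteMeasure μ] {m : MeasurableSpace Ω} (hm : m ≤ m0)
    {f : Ω → ℝ} (hf : Integrable f μ) {a b : ℝ} (h : ∀ᵐ ω ∂μ, f ω ∈ Set.Icc a b) :
    ∀ᵐ ω ∂μ, (μ[f | m]) ω ∈ Set.Icc a b := by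
  have hlo : μ[fun _ => a | m] ≤ᵐ[μ] μ[f | m] :=
    condExp_mono (integrable_const _) hf (h.mono fun ω hω => hω.1)
  have hhi : μ[f | m] ≤ᵐ[μ] μ[fun _ => b | m] :=
    condExp_mono hf (integrable_const _) (h.mono fun ω hω => hω.2)
  rw [condExp_const hm] at hlo hhi
  filter_upwards [hlo, hhi] with ω h1 h2 using ⟨h1, h2⟩

/-- For an adapted `[0,1]`-valued process, the exponential of half the compensator minus the
process has expectation at most one. -/
lemma integral_exp_half_compensator_sub_le_one [IsProbabilityMeasure μ] (ℱ : Filtration ℕ m0)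
    (Y : ℕ → Ω → ℝ) (hY : ∀ i, Measurable[ℱ (i + 1)] (Y i))
    (hbd : ∀ i, ∀ᵐ ω ∂μ, Y i ω ∈ Set.Icc (0 : ℝ) 1) (n : ℕ) :
    StronglyMeasurable[ℱ n]
        (fun ω => Real.exp (∑ i ∈ range n, ((μ[Y i | ℱ i]) ω / 2 - Y i ω))) ∧
      Integrable (fun ω => Real.exp (∑ i ∈ range n, ((μ[Y i | ℱ i]) ω / 2 - Y i ω))) μ ∧
      ∫ ω, Real.exp (∑ i ∈ range n, ((μ[Y i | ℱ i]) ω / 2 - Y i ω)) ∂μ ≤ 1 := by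
  induction n with
  | zero => simp [stronglyMeasurable_const]
  | succ n ih =>
    obtain ⟨hZm, hZi, hZ1⟩ := ih
    set Z : Ω → ℝ := fun ω => Real.exp (∑ i ∈ range n, ((μ[Y i | ℱ i]) ω / 2 - Y i ω)) with hZ
    set D : Ω → ℝ := μ[Y n | ℱ n]
    have hDm : StronglyMeasurable[ℱ n] D := stronglyMeasurable_condExp
    have hYm : StronglyMeasurable[ℱ (n + 1)] (Y n) := (hY n).stronglyMeasurable
    have hYm0 : AEStronglyMeasurable (Y n) μ := (hYm.mono (ℱ.le _)).aestronglyMeasurable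
    have hYi : Integrable (Y n) μ := Integrable.of_mem_Icc 0 1 hYm0.aemeasurable (hbd n)
    have hDbd : ∀ᵐ ω ∂μ, D ω ∈ Set.Icc (0 : ℝ) 1 :=
      condExp_mem_Icc_of_ae_mem_Icc (ℱ.le n) hYi (hbd n)
    have hsucc : (fun ω => Real.exp (∑ i ∈ range (n + 1), ((μ[Y i | ℱ i]) ω / 2 - Y i ω))) =
        fun ω => Z ω * Real.exp (D ω / 2) * Real.exp (-(Y n ω)) := by
      funext ω
      rw [sum_range_succ, hZ, ← Real.exp_add, ← Real.exp_add]
      congr 1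
      ring
    rw [hsucc]
    have hEm : StronglyMeasurable[ℱ n] fun ω => Real.exp (D ω / 2) :=
      (Real.continuous_exp.comp (continuous_id.div_const 2)).comp_stronglyMeasurable hDm
    set W : Ω → ℝ := fun ω => Z ω * Real.exp (D ω / 2) with hW
    have hWm : StronglyMeasurable[ℱ n] W := hZm.mul hEm
    have hWi : Integrable W μ := by
      refine hZi.mul_bdd (c := Real.exp 1) (hEm.mono (ℱ.le n)).aestronglyMeasurable ?_
      filter_upwards [hDbd] with ω hω
      rw [Real.norm_eq_abs, abs_of_pos (Real.exp_pos _)]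
      exact Real.exp_le_exp.2 (by linarith [hω.1, hω.2])
    have hXm : StronglyMeasurable[ℱ (n + 1)] fun ω => Real.exp (-(Y n ω)) :=
      Real.continuous_exp.comp_stronglyMeasurable hYm.neg
    have hVi : Integrable (fun ω => W ω * Real.exp (-(Y n ω))) μ := by
      refine hWi.mul_bdd (c := 1) (hXm.mono (ℱ.le _)).aestronglyMeasurable ?_
      filter_upwards [hbd n] with ω hω
      rw [Real.norm_eq_abs, abs_of_pos (Real.exp_pos _)]
      exact Real.exp_le_one_iff.2 (by linarith [hω.1])
    have hWY : Integrable (W * Y n) μ := by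
      refine hWi.mul_bdd (c := 1) hYm0 ?_
      filter_upwards [hbd n] with ω hω
      rw [Real.norm_eq_abs, abs_of_nonneg hω.1]
      exact hω.2
    have hWD : Integrable (W * D) μ := by
      refine hWi.mul_bdd (c := 1) (hDm.mono (ℱ.le n)).aestronglyMeasurable ?_
      filter_upwards [hDbd] with ω hω
      rw [Real.norm_eq_abs, abs_of_nonneg hω.1]
      exact hω.2
    have hpull : ∫ ω, (W * Y n) ω ∂μ = ∫ ω, (W * D) ω ∂μ := by
      rw [← integral_condExp (ℱ.le n)]
      exact integral_congr_ae (condExp_mul_of_stronglyMeasurable_left hWm hWY hYi)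
    refine ⟨(hWm.mono (ℱ.mono n.le_succ)).mul hXm, hVi, ?_⟩
    calc ∫ ω, W ω * Real.exp (-(Y n ω)) ∂μ
        ≤ ∫ ω, (W ω - (W * Y n) ω / 2) ∂μ := by
          refine integral_mono_ae hVi (hWi.sub (hWY.div_const 2)) ?_
          filter_upwards [hbd n] with ω hω
          have hpos : 0 ≤ W ω := by positivity
          have := mul_le_mul_of_nonneg_left (exp_neg_le_one_sub_half hω.1 hω.2) hpos
          simp only [Pi.mul_apply]
          linarith
      _ = ∫ ω, (W ω - (W * D) ω / 2) ∂μ := by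
          rw [integral_sub hWi (hWY.div_const 2), integral_sub hWi (hWD.div_const 2),
            integral_div, integral_div, hpull]
      _ ≤ ∫ ω, Z ω ∂μ := by
          refine integral_mono (hWi.sub (hWD.div_const 2)) hZi fun ω => ?_
          have hle : 1 - D ω / 2 ≤ Real.exp (-(D ω / 2)) := by
            linarith [Real.add_one_le_exp (-(D ω / 2))]
          have hpos : 0 ≤ W ω := by positivity
          have hcancel : W ω * Real.exp (-(D ω / 2)) = Z ω := by
            rw [hW]
            simp only [mul_assoc, ← Real.exp_add, add_neg_cancel, Real.exp_zero, mul_one]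
          have := mul_le_mul_of_nonneg_left hle hpos
          simp only [Pi.mul_apply]
          linarith
      _ ≤ 1 := hZ1

/-- Freedman-type lower tail bound for sums of `[0,1]`-valued adapted variables. -/
lemma measure_half_compensator_sub_ge_le [IsProbabilityMeasure μ] (ℱ : Filtration ℕ m0)
    (Y : ℕ → Ω → ℝ) (hY : ∀ i, Measurable[ℱ (i + 1)] (Y i))
    (hbd : ∀ i, ∀ᵐ ω ∂μ, Y i ω ∈ Set.Icc (0 : ℝ) 1) (n : ℕ) (a : ℝ) :
    μ {ω | a ≤ ∑ i ∈ range n, ((μ[Y i | ℱ i]) ω / 2 - Y i ω)} ≤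
      ENNReal.ofReal (Real.exp (-a)) := by
  obtain ⟨-, hi, h1⟩ := integral_exp_half_compensator_sub_le_one ℱ Y hY hbd n
  set S : Ω → ℝ := fun ω => ∑ i ∈ range n, ((μ[Y i | ℱ i]) ω / 2 - Y i ω)
  have hchernoff := measure_ge_le_exp_mul_mgf (μ := μ) (X := S) (t := 1) a zero_le_one
    (by simpa only [one_mul] using hi)
  have hmgf : mgf S μ 1 ≤ 1 := by simpa only [mgf, one_mul] using h1
  have hle : μ.real {ω | a ≤ S ω} ≤ Real.exp (-a) := by
    refine hchernoff.trans ?_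
    rw [neg_one_mul]
    exact mul_le_of_le_one_right (Real.exp_pos _).le hmgf
  rw [← ofReal_measureReal]
  exact ENNReal.ofReal_le_ofReal hle

end Probability

section QuadraticForm

variable {ι : Type*} [Fintype ι]

lemma dotProduct_mulVec_eq_sum (M : Matrix ι ι ℝ) (v : ι → ℝ) :
    v ⬝ᵥ M.mulVec v = ∑ j, ∑ k, v j * v k * M j k := by
  simp only [dotProduct, mulVec, mul_sum]
  exact sum_congr rfl fun j _ => sum_congr rfl fun k _ => by ring

lemma dotProduct_vecMulVec_mulVec (x v : ι → ℝ) :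
    v ⬝ᵥ (vecMulVec x x).mulVec v = (v ⬝ᵥ x) ^ 2 := by
  rw [dotProduct_mulVec_eq_sum, sq, dotProduct, sum_mul_sum]
  exact sum_congr rfl fun j _ => sum_congr rfl fun k _ => by rw [vecMulVec_apply]; ring

lemma dotProduct_sum_mulVec {κ : Type*} (s : Finset κ) (M : κ → Matrix ι ι ℝ) (v : ι → ℝ) :
    v ⬝ᵥ (∑ i ∈ s, M i).mulVec v = ∑ i ∈ s, v ⬝ᵥ (M i).mulVec v := by
  rw [sum_mulVec, dotProduct_sum]

lemma sq_dotProduct_le (v x : ι → ℝ) : (v ⬝ᵥ x) ^ 2 ≤ (v ⬝ᵥ v) * (x ⬝ᵥ x) := by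
  simpa [dotProduct, sq] using sum_mul_sq_le_sq_mul_sq univ v x

lemma abs_apply_le_one_of_dotProduct_self_le_one {x : ι → ℝ} (h : x ⬝ᵥ x ≤ 1) (j : ι) :
    |x j| ≤ 1 := by
  have hj : x j * x j ≤ x ⬝ᵥ x :=
    single_le_sum (f := fun j => x j * x j) (fun k _ => mul_self_nonneg _) (mem_univ j)
  exact abs_le_one_iff_mul_self_le_one.2 (hj.trans h)

lemma abs_quadratic_form_sub_le (M : Matrix ι ι ℝ) {B ε : ℝ} (hM : ∀ j k, |M j k| ≤ B)
    {v w : ι → ℝ} (hv : ∀ j, |v j| ≤ 1) (hw : ∀ j, |w j| ≤ 1) (hvw : ∀ j, |v j - w j| ≤ ε) :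
    |v ⬝ᵥ M.mulVec v - w ⬝ᵥ M.mulVec w| ≤ Fintype.card ι ^ 2 * (2 * ε * B) := by
  rw [dotProduct_mulVec_eq_sum, dotProduct_mulVec_eq_sum, ← sum_sub_distrib]
  have hterm : ∀ j k, |v j * v k * M j k - w j * w k * M j k| ≤ 2 * ε * B := by
    intro j k
    have hε : 0 ≤ ε := (abs_nonneg _).trans (hvw j)
    have hsplit : v j * v k - w j * w k = v j * (v k - w k) + (v j - w j) * w k := by ring
    rw [← sub_mul, abs_mul, hsplit]
    refine mul_le_mul ?_ (hM j k) (abs_nonneg _) (by positivity)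
    refine (abs_add_le _ _).trans ?_
    rw [abs_mul, abs_mul]
    have h1 := mul_le_mul (hv j) (hvw k) (abs_nonneg _) zero_le_one
    have h2 := mul_le_mul (hvw j) (hw k) (abs_nonneg _) hε
    linarith
  calc |∑ j, (∑ k, v j * v k * M j k - ∑ k, w j * w k * M j k)|
      ≤ ∑ j, |∑ k, v j * v k * M j k - ∑ k, w j * w k * M j k| := abs_sum_le_sum_abs _ _
    _ ≤ ∑ _j : ι, ∑ _k : ι, 2 * ε * B := by
        refine sum_le_sum fun j _ => ?_
        rw [← sum_sub_distrib]
        exact (abs_sum_le_sum_abs _ _).trans (sum_le_sum fun k _ => hterm j k)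
    _ = Fintype.card ι ^ 2 * (2 * ε * B) := by
        simp only [sum_const, card_univ, nsmul_eq_mul]
        ring

end QuadraticForm

lemma exists_int_abs_le_abs_sub_le_one (t : ℝ) : ∃ k : ℤ, |(k : ℝ)| ≤ |t| ∧ |t - k| ≤ 1 := by
  have hnonneg : ∀ t : ℝ, 0 ≤ t → |((⌊t⌋ : ℤ) : ℝ)| ≤ |t| ∧ |t - ⌊t⌋| ≤ 1 := by
    intro t ht
    have h0 : (0 : ℝ) ≤ (⌊t⌋ : ℤ) := by exact_mod_cast Int.floor_nonneg.2 ht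
    rw [abs_of_nonneg h0, abs_of_nonneg ht, abs_le]
    exact ⟨Int.floor_le t, by linarith [Int.floor_le t], by linarith [Int.lt_floor_add_one t]⟩
  rcases le_total 0 t with ht | ht
  · exact ⟨⌊t⌋, hnonneg t ht⟩
  · obtain ⟨h1, h2⟩ := hnonneg (-t) (neg_nonneg.2 ht)
    refine ⟨-⌊-t⌋, ?_, ?_⟩
    · rwa [Int.cast_neg, abs_neg, ← abs_neg t]
    · rw [← abs_neg, Int.cast_neg]
      convert h2 using 2
      ring

/-- Rounding towards zero on the grid of mesh `1 / K` inside the unit ball. -/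
lemma exists_grid_point_near {d K : ℕ} (hK : 0 < K) {v : Fin d → ℝ} (hv : v ⬝ᵥ v ≤ 1) :
    ∃ k ∈ Fintype.piFinset (fun _ : Fin d => Finset.Icc (-(K : ℤ)) K),
      (fun j => (k j : ℝ) / K) ⬝ᵥ (fun j => (k j : ℝ) / K) ≤ 1 ∧
        ∀ j, |v j - (k j : ℝ) / K| ≤ 1 / K := by
  have hK' : (0 : ℝ) < K := by exact_mod_cast hK
  choose k hk1 hk2 using fun j => exists_int_abs_le_abs_sub_le_one (K * v j)
  have hle : ∀ j, |(k j : ℝ) / K| ≤ |v j| := by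
    intro j
    rw [abs_div, abs_of_pos hK', div_le_iff₀ hK', mul_comm]
    simpa [abs_mul] using hk1 j
  refine ⟨k, ?_, ?_, ?_⟩
  · rw [Fintype.mem_piFinset]
    intro j
    have h : |(k j : ℝ)| ≤ K := by
      refine (hk1 j).trans ?_
      rw [abs_mul, abs_of_pos hK']
      exact mul_le_of_le_one_right hK'.le (abs_apply_le_one_of_dotProduct_self_le_one hv j)
    rw [Finset.mem_Icc, ← abs_le]
    exact_mod_cast h
  · refine le_trans (sum_le_sum fun j _ => ?_) hv
    exact abs_le_iff_mul_self_le.1 (hle j)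
  · intro j
    have h : v j - (k j : ℝ) / K = (K * v j - k j) / K := by field_simp
    rw [h, abs_div, abs_of_pos hK']
    exact div_le_div_of_nonneg_right (hk2 j) hK'.le

section Covariance

variable {Ω : Type*} {m m0 : MeasurableSpace Ω} {μ : Measure Ω} {d : ℕ} {x : Ω → Fin d → ℝ}

lemma ae_mul_apply_mem_Icc (hbd : ∀ᵐ ω ∂μ, x ω ⬝ᵥ x ω ≤ 1) (j k : Fin d) :
    ∀ᵐ ω ∂μ, x ω j * x ω k ∈ Set.Icc (-1 : ℝ) 1 := by
  filter_upwards [hbd] with ω hω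
  rw [Set.mem_Icc, ← abs_le, abs_mul]
  exact mul_le_one₀ (abs_apply_le_one_of_dotProduct_self_le_one hω j) (abs_nonneg _)
    (abs_apply_le_one_of_dotProduct_self_le_one hω k)

lemma integrable_mul_apply [IsFiniteMeasure μ] (hx : Measurable x)
    (hbd : ∀ᵐ ω ∂μ, x ω ⬝ᵥ x ω ≤ 1) (j k : Fin d) :
    Integrable (fun ω => x ω j * x ω k) μ :=
  Integrable.of_mem_Icc (-1) 1
    ((measurable_pi_iff.1 hx j).mul (measurable_pi_iff.1 hx k)).aemeasurable
    (ae_mul_apply_mem_Icc hbd j k)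

/-- The quadratic form of the entrywise conditional second moment matrix. -/
lemma ae_quadratic_form_condExp [IsFiniteMeasure μ] (hx : Measurable x)
    (hbd : ∀ᵐ ω ∂μ, x ω ⬝ᵥ x ω ≤ 1) (v : Fin d → ℝ) :
    ∀ᵐ ω ∂μ, v ⬝ᵥ (Matrix.of fun j k => (μ[(fun ω' => x ω' j * x ω' k) | m]) ω).mulVec v =
      (μ[(fun ω' => (v ⬝ᵥ x ω') ^ 2) | m]) ω := by
  have hfun : (fun ω' => (v ⬝ᵥ x ω') ^ 2) =
      ∑ p : Fin d × Fin d, (v p.1 * v p.2) • fun ω' => x ω' p.1 * x ω' p.2 := by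
    funext ω'
    rw [← dotProduct_vecMulVec_mulVec, dotProduct_mulVec_eq_sum, Finset.sum_apply,
      Fintype.sum_prod_type]
    simp [vecMulVec_apply]
  have hsum := condExp_finsetSum (μ := μ) (s := univ)
    (f := fun p : Fin d × Fin d => (v p.1 * v p.2) • fun ω' => x ω' p.1 * x ω' p.2)
    (fun p _ => (integrable_mul_apply hx hbd p.1 p.2).smul (v p.1 * v p.2)) m
  have hsmul : ∀ᵐ ω ∂μ, ∀ p : Fin d × Fin d,
      (μ[(v p.1 * v p.2) • (fun ω' => x ω' p.1 * x ω' p.2) | m]) ω =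
        ((v p.1 * v p.2) • μ[(fun ω' => x ω' p.1 * x ω' p.2) | m]) ω :=
    ae_all_iff.2 fun p => condExp_smul _ _ m
  rw [hfun]
  filter_upwards [hsum, hsmul] with ω h1 h2
  rw [h1, Finset.sum_apply, sum_congr rfl fun p _ => h2 p, Fintype.sum_prod_type,
    dotProduct_mulVec_eq_sum]
  simp

lemma ae_sq_dotProduct_mem_Icc (hbd : ∀ᵐ ω ∂μ, x ω ⬝ᵥ x ω ≤ 1) (v : Fin d → ℝ) :
    ∀ᵐ ω ∂μ, (v ⬝ᵥ x ω) ^ 2 ∈ Set.Icc 0 (v ⬝ᵥ v) := by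
  filter_upwards [hbd] with ω hω
  refine ⟨sq_nonneg _, (sq_dotProduct_le v (x ω)).trans ?_⟩
  exact mul_le_of_le_one_right (sum_nonneg fun j _ => mul_self_nonneg _) hω

lemma measurable_sq_dotProduct {m : MeasurableSpace Ω} (hx : Measurable x) (v : Fin d → ℝ) :
    Measurable fun ω => (v ⬝ᵥ x ω) ^ 2 := by
  unfold dotProduct
  fun_prop

/-- Almost surely, the conditional second moment matrix is bounded by the identity. -/
lemma ae_forall_quadratic_form_condExp_le [IsFiniteMeasure μ] (hm : m ≤ m0) (hx : Measurable x)
    (hbd : ∀ᵐ ω ∂μ, x ω ⬝ᵥ x ω ≤ 1) :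
    ∀ᵐ ω ∂μ, ∀ v : Fin d → ℝ,
      v ⬝ᵥ (Matrix.of fun j k => (μ[(fun ω' => x ω' j * x ω' k) | m]) ω).mulVec v ≤ v ⬝ᵥ v := by
  have hdense : ∀ᵐ ω ∂μ, ∀ q : ℕ,
      TopologicalSpace.denseSeq (Fin d → ℝ) q ⬝ᵥ
        (Matrix.of fun j k => (μ[(fun ω' => x ω' j * x ω' k) | m]) ω).mulVec
          (TopologicalSpace.denseSeq (Fin d → ℝ) q) ≤
        TopologicalSpace.denseSeq (Fin d → ℝ) q ⬝ᵥ TopologicalSpace.denseSeq (Fin d → ℝ) q := by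
    refine ae_all_iff.2 fun q => ?_
    set v := TopologicalSpace.denseSeq (Fin d → ℝ) q
    have hint : Integrable (fun ω => (v ⬝ᵥ x ω) ^ 2) μ :=
      Integrable.of_mem_Icc 0 (v ⬝ᵥ v) (measurable_sq_dotProduct hx v).aemeasurable
        (ae_sq_dotProduct_mem_Icc hbd v)
    filter_upwards [ae_quadratic_form_condExp (m := m) hx hbd v,
      condExp_mem_Icc_of_ae_mem_Icc hm hint (ae_sq_dotProduct_mem_Icc hbd v)] with ω h1 h2
    rw [h1]
    exact h2.2
  filter_upwards [hdense] with ω hω v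
  have hclosed : IsClosed {v : Fin d → ℝ |
      v ⬝ᵥ (Matrix.of fun j k => (μ[(fun ω' => x ω' j * x ω' k) | m]) ω).mulVec v ≤ v ⬝ᵥ v} :=
    isClosed_le (continuous_id.dotProduct (continuous_const.matrix_mulVec continuous_id))
      (continuous_id.dotProduct continuous_id)
  exact isClosed_property (TopologicalSpace.denseRange_denseSeq (Fin d → ℝ)) hclosed hω v

end Covariance

lemma two_le_log_nine_mul {n : ℕ} (hn : 0 < n) : 2 ≤ Real.log (9 * n) := by
  have hn' : (1 : ℝ) ≤ n := by exact_mod_cast hn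
  rw [Real.le_log_iff_exp_le (by positivity)]
  have h : Real.exp 2 = Real.exp 1 * Real.exp 1 := by rw [← Real.exp_add]; norm_num
  nlinarith [Real.exp_one_lt_d9, Real.exp_pos 1]

lemma log_grid_card_le {n : ℕ} (hn : 0 < n) :
    Real.log (2 * (n : ℝ) ^ 3 + 1) ≤ 3 * Real.log (9 * n) := by
  have hn' : (1 : ℝ) ≤ n := by exact_mod_cast hn
  have h : 3 * Real.log (9 * n) = Real.log ((9 * n) ^ 3) := by simp
  rw [h]
  refine Real.log_le_log (by positivity) ?_
  nlinarith [one_le_pow₀ hn' (n := 3)]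

/-- **Uniform comparison of empirical and population covariance (Lemma: matrix_bernstein).**
Let `X₁, …, Xₙ` be conditionally centered random vectors in `ℝ^d` adapted to `{F_i}`
(each `X_i` realized by time `i+1`, `E[X_i | F_i] = 0`) with `‖X_i‖₂ ≤ 1` a.s.  With
`Σ̂ = ∑ᵢ Xᵢ Xᵢᵀ` and `Σ = ∑ᵢ E[Xᵢ Xᵢᵀ | F_i]` (entrywise conditional expectations),
for any `δ ∈ (0,1)`, with probability at least `1 − δ`, simultaneously for all unit
vectors `v`: `vᵀ Σ v ≤ 2 vᵀ Σ̂ v + 9 d log(9n) + 8 log(2/δ)`. -/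
theorem stmt_6 {Ω : Type*} {m0 : MeasurableSpace Ω}
    (μ : Measure Ω) [IsProbabilityMeasure μ]
    (ℱ : Filtration ℕ m0)
    {d n : ℕ}
    (X : ℕ → Ω → (Fin d → ℝ))
    (hXmeas : ∀ i, Measurable (X i))
    (hXadapted : ∀ i, Measurable[ℱ (i + 1)] (X i))
    (hXbd : ∀ i, ∀ᵐ ω ∂μ, Real.sqrt (X i ω ⬝ᵥ X i ω) ≤ 1)
    (hcent : ∀ i, μ[X i | ℱ i] =ᵐ[μ] 0)
    (δ : ℝ) (hδ : 0 < δ) (hδ1 : δ < 1) :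
    ENNReal.ofReal (1 - δ) ≤
      μ {ω | ∀ v : Fin d → ℝ, v ⬝ᵥ v = 1 →
        v ⬝ᵥ (∑ i ∈ Finset.range n,
            (Matrix.of fun j k => (μ[(fun ω' => X i ω' j * X i ω' k) | ℱ i]) ω)).mulVec v ≤
          2 * (v ⬝ᵥ (∑ i ∈ Finset.range n, vecMulVec (X i ω) (X i ω)).mulVec v) +
            9 * d * Real.log (9 * n) + 8 * Real.log (2 / δ)} := by
  have hsq : ∀ i, ∀ᵐ ω ∂μ, X i ω ⬝ᵥ X i ω ≤ 1 := fun i => by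
    filter_upwards [hXbd i] with ω hω
    exact by simpa using hω
  have hlogδ : 0 ≤ Real.log (1 / δ) := Real.log_nonneg (one_le_one_div hδ hδ1.le)
  have hlogδ' : Real.log (1 / δ) ≤ Real.log (2 / δ) :=
    Real.log_le_log (by positivity) (div_le_div_of_nonneg_right one_le_two hδ.le)
  have hmeas : ∀ v : Fin d → ℝ, ∀ i, Measurable[ℱ (i + 1)] fun ω => (v ⬝ᵥ X i ω) ^ 2 :=
    fun v i => measurable_sq_dotProduct (hXadapted i) v
  set P : ℕ → Ω → Matrix (Fin d) (Fin d) ℝ := fun i ω =>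
    Matrix.of fun j k => (μ[(fun ω' => X i ω' j * X i ω' k) | ℱ i]) ω
  rcases le_or_gt n d with hnd | hdn
  · -- the deterministic bound `Σ ≤ n` already suffices
    have hae : ∀ᵐ ω ∂μ, ∀ i, ∀ v : Fin d → ℝ, v ⬝ᵥ (P i ω).mulVec v ≤ v ⬝ᵥ v :=
      ae_all_iff.2 fun i => ae_forall_quadratic_form_condExp_le (ℱ.le i) (hXmeas i) (hsq i)
    have hnlog : (n : ℝ) ≤ 9 * d * Real.log (9 * n) := by
      rcases Nat.eq_zero_or_pos n with rfl | hn
      · simp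
      · have h2 := two_le_log_nine_mul hn
        have hnd' : (n : ℝ) ≤ d := by exact_mod_cast hnd
        nlinarith
    refine le_trans (ENNReal.ofReal_le_one.2 (by linarith)) ?_
    refine (measure_univ (μ := μ)).symm.le.trans (measure_mono_ae ?_)
    filter_upwards [hae] with ω hω _
    intro v hv
    have hhat : 0 ≤ v ⬝ᵥ (∑ i ∈ range n, vecMulVec (X i ω) (X i ω)).mulVec v := by
      rw [dotProduct_sum_mulVec]
      exact sum_nonneg fun i _ => by rw [dotProduct_vecMulVec_mulVec]; positivity
    have hS : v ⬝ᵥ (∑ i ∈ range n, P i ω).mulVec v ≤ n := by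
      rw [dotProduct_sum_mulVec]
      refine (sum_le_sum fun i _ => hω i v).trans ?_
      simp [hv]
    linarith
  have hn : 0 < n := by omega
  have hn' : (0 : ℝ) < n := by exact_mod_cast hn
  set K : ℕ := n ^ 3 with hK
  have hKpos : 0 < K := by positivity
  have hK' : (K : ℝ) = (n : ℝ) ^ 3 := by simp [hK]
  set N := Fintype.piFinset (fun _ : Fin d => Finset.Icc (-(K : ℤ)) K) with hN
  have hNcard : (N.card : ℝ) = (2 * (K : ℝ) + 1) ^ d := by
    have hIcc : (Finset.Icc (-(K : ℤ)) K).card = 2 * K + 1 := by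
      rw [Int.card_Icc]
      omega
    rw [hN, Fintype.card_piFinset, prod_const, hIcc, card_univ, Fintype.card_fin]
    push_cast
    ring
  set g : (Fin d → ℤ) → Fin d → ℝ := fun k j => (k j : ℝ) / K
  set a : ℝ := d * Real.log (2 * (K : ℝ) + 1) + Real.log (1 / δ) with ha
  have hexp : N.card * Real.exp (-a) = δ := by
    have hpos : (0 : ℝ) < (2 * (K : ℝ) + 1) ^ d := by positivity
    have : Real.exp (-a) = ((2 * (K : ℝ) + 1) ^ d)⁻¹ * δ := by
      rw [ha, ← Real.log_pow, ← Real.log_mul hpos.ne' (by positivity), ← Real.log_inv,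
        Real.exp_log (by positivity)]
      simp [mul_comm]
    rw [hNcard, this, mul_inv_cancel_left₀ hpos.ne']
  set S : (Fin d → ℝ) → Ω → ℝ := fun w ω => ∑ i ∈ range n,
    ((μ[(fun ω' => (w ⬝ᵥ X i ω') ^ 2) | ℱ i]) ω / 2 - (w ⬝ᵥ X i ω) ^ 2)
  set N' := N.filter fun k => g k ⬝ᵥ g k ≤ 1 with hN'
  have hbad : μ (⋃ k ∈ N', {ω | a ≤ S (g k) ω}) ≤ ENNReal.ofReal δ := by
    calc μ (⋃ k ∈ N', {ω | a ≤ S (g k) ω})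
        ≤ ∑ k ∈ N', μ {ω | a ≤ S (g k) ω} := measure_biUnion_finset_le _ _
      _ ≤ ∑ _k ∈ N', ENNReal.ofReal (Real.exp (-a)) := by
          refine sum_le_sum fun k hk => ?_
          refine measure_half_compensator_sub_ge_le ℱ (fun i ω => (g k ⬝ᵥ X i ω) ^ 2)
            (hmeas (g k)) (fun i => ?_) n a
          filter_upwards [ae_sq_dotProduct_mem_Icc (hsq i) (g k)] with ω hω
          exact ⟨hω.1, hω.2.trans (mem_filter.1 hk).2⟩
      _ ≤ ∑ _k ∈ N, ENNReal.ofReal (Real.exp (-a)) :=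
          sum_le_sum_of_subset (filter_subset _ _)
      _ = ENNReal.ofReal δ := by
          rw [sum_const, nsmul_eq_mul, ← hexp, ENNReal.ofReal_mul (Nat.cast_nonneg _),
            ENNReal.ofReal_natCast]
  have hform : ∀ᵐ ω ∂μ, ∀ k : Fin d → ℤ, ∀ i, g k ⬝ᵥ (P i ω).mulVec (g k) =
      (μ[(fun ω' => (g k ⬝ᵥ X i ω') ^ 2) | ℱ i]) ω :=
    ae_all_iff.2 fun k => ae_all_iff.2 fun i =>
      ae_quadratic_form_condExp (hXmeas i) (hsq i) (g k)
  have hentry : ∀ᵐ ω ∂μ, ∀ i j k, P i ω j k ∈ Set.Icc (-1 : ℝ) 1 :=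
    ae_all_iff.2 fun i => ae_all_iff.2 fun j => ae_all_iff.2 fun k =>
      condExp_mem_Icc_of_ae_mem_Icc (ℱ.le i) (integrable_mul_apply (hXmeas i) (hsq i) j k)
        (ae_mul_apply_mem_Icc (hsq i) j k)
  have hentry' : ∀ᵐ ω ∂μ, ∀ i j k, X i ω j * X i ω k ∈ Set.Icc (-1 : ℝ) 1 :=
    ae_all_iff.2 fun i => ae_all_iff.2 fun j => ae_all_iff.2 fun k =>
      ae_mul_apply_mem_Icc (hsq i) j k
  rw [ENNReal.ofReal_sub _ hδ.le, ENNReal.ofReal_one, tsub_le_iff_right]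
  refine le_trans ?_ (add_le_add_right hbad _)
  refine le_trans ?_ (measure_union_le _ _)
  refine (measure_univ (μ := μ)).symm.le.trans (measure_mono_ae ?_)
  filter_upwards [hform, hentry, hentry'] with ω hform hentry hentry' _
  by_cases hω : ω ∈ ⋃ k ∈ N', {ω | a ≤ S (g k) ω}
  · exact Or.inr hω
  refine Or.inl fun v hv => ?_
  obtain ⟨k, hkN, hk1, hkv⟩ := exists_grid_point_near hKpos hv.le
  have hlt : S (g k) ω < a := by
    by_contra! h
    exact hω (Set.mem_biUnion (mem_filter.2 ⟨hkN, hk1⟩) h)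
  have hbound : ∀ M : ℕ → Matrix (Fin d) (Fin d) ℝ,
      (∀ i j k, M i j k ∈ Set.Icc (-1 : ℝ) 1) →
      |v ⬝ᵥ (∑ i ∈ range n, M i).mulVec v - g k ⬝ᵥ (∑ i ∈ range n, M i).mulVec (g k)| ≤ 2 := by
    intro M hM
    have hsum : ∀ j l, |(∑ i ∈ range n, M i) j l| ≤ n := by
      intro j l
      rw [Matrix.sum_apply]
      refine (abs_sum_le_sum_abs _ _).trans ?_
      refine (sum_le_sum fun i _ => abs_le.2 (hM i j l)).trans ?_
      simp
    refine (abs_quadratic_form_sub_le _ hsum (abs_apply_le_one_of_dotProduct_self_le_one hv.le)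
      (abs_apply_le_one_of_dotProduct_self_le_one hk1) hkv).trans ?_
    have hdn' : (d : ℝ) ≤ n := by exact_mod_cast hdn.le
    rw [Fintype.card_fin, hK']
    calc (d : ℝ) ^ 2 * (2 * (1 / (n : ℝ) ^ 3) * n)
        ≤ (n : ℝ) ^ 2 * (2 * (1 / (n : ℝ) ^ 3) * n) := by gcongr
      _ = 2 := by field_simp
  have h1 := (abs_le.1 (hbound (fun i => P i ω) hentry)).2
  have h2 := (abs_le.1 (hbound (fun i => vecMulVec (X i ω) (X i ω)) hentry')).1
  have hgrid : g k ⬝ᵥ (∑ i ∈ range n, P i ω).mulVec (g k) / 2 -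
      g k ⬝ᵥ (∑ i ∈ range n, vecMulVec (X i ω) (X i ω)).mulVec (g k) = S (g k) ω := by
    rw [dotProduct_sum_mulVec, dotProduct_sum_mulVec, sum_div, ← sum_sub_distrib]
    exact sum_congr rfl fun i _ => by rw [hform k i, dotProduct_vecMulVec_mulVec]
  have hd : (1 : ℝ) ≤ d := by
    rcases Nat.eq_zero_or_pos d with rfl | hd
    · simp [dotProduct] at hv
    · exact_mod_cast hd
  have hlog := two_le_log_nine_mul hn
  have hcard : d * Real.log (2 * (K : ℝ) + 1) ≤ d * (3 * Real.log (9 * n)) := by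
    rw [hK']
    exact mul_le_mul_of_nonneg_left (log_grid_card_le hn) (Nat.cast_nonneg d)
  have hdlog : 2 ≤ d * Real.log (9 * n) := by nlinarith
  linarith
end

section
/- For any vectors z₁,…,z_n ∈ ℝ^d and any positive definite d×d matrix M, there exists a probability distribution w ∈ Δ([n]) with mean μ_w := E_{b∼w}[z_b] such that for every i ∈ [n], ‖z_i − μ_w‖²_M ≤ tr(M · Cov_{b∼w}(z_b)). -/
open Matrix Finset

/-- Weighting vectors by `w`, the quantity `tr (M * Cov)` is the mean of the quadratic form of `M`
minus the quadratic form at the mean. -/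
theorem trace_mul_weighted_cov {m ι : Type*} [Fintype m] [Fintype ι] (M : Matrix m m ℝ)
    (z : ι → m → ℝ) (w : ι → ℝ) :
    (M * ((∑ j, w j • vecMulVec (z j) (z j)) -
        vecMulVec (∑ j, w j • z j) (∑ j, w j • z j))).trace =
      ∑ j, w j * (z j ⬝ᵥ M *ᵥ z j) - (∑ j, w j • z j) ⬝ᵥ M *ᵥ ∑ j, w j • z j := by
  simp only [mul_sub, Matrix.mul_sum, Matrix.mul_smul, trace_sub, trace_sum, trace_smul,
    mul_vecMulVec, trace_vecMulVec, smul_eq_mul, dotProduct_comm (M *ᵥ _)]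

theorem dotProduct_mulVec_comm_of_isSymm {m : Type*} [Fintype m] {M : Matrix m m ℝ}
    (hM : M.IsSymm) (x y : m → ℝ) : x ⬝ᵥ M *ᵥ y = y ⬝ᵥ M *ᵥ x := by
  rw [dotProduct_mulVec, dotProduct_comm, ← mulVec_transpose, hM.eq]

/-- If `a ≤ b + t * c` for all `t ∈ (0, 1]`, then `a ≤ b`. -/
theorem le_of_forall_le_add_mul {a b c : ℝ} (h : ∀ t : ℝ, 0 < t → t ≤ 1 → a ≤ b + t * c) :
    a ≤ b := by
  by_contra! hab
  have hc : a - b ≤ c := by linarith [h 1 one_pos le_rfl]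
  have hpos : 0 < c := by linarith
  have := h ((a - b) / (2 * c)) (by apply div_pos <;> linarith)
    (by rw [div_le_one (by linarith)]; linarith)
  have e : (a - b) / (2 * c) * c = (a - b) / 2 := by field_simp
  linarith

/-- **Feasibility of the exploration distribution (convex duality lemma).**
For any vectors `z₁, …, zₙ ∈ ℝ^d` and any positive definite matrix `M`, there is a
probability distribution `w ∈ Δ([n])` with mean `μ_w = E_{b∼w}[z_b]` such that for every `i`,
`‖zᵢ − μ_w‖²_M ≤ tr (M ⬝ Cov_{b∼w}(z_b))`. -/
theorem stmt_7 {d n : ℕ} (hn : 0 < n) (z : Fin n → (Fin d → ℝ))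
    (M : Matrix (Fin d) (Fin d) ℝ) (hM : M.PosDef) :
    ∃ w : Fin n → ℝ, (∀ i, 0 ≤ w i) ∧ (∑ i, w i) = 1 ∧
      ∀ i : Fin n,
        (z i - ∑ j, w j • z j) ⬝ᵥ M.mulVec (z i - ∑ j, w j • z j) ≤
          (M * ((∑ j, w j • vecMulVec (z j) (z j)) -
            vecMulVec (∑ j, w j • z j) (∑ j, w j • z j))).trace := by
  have hsymm : M.IsSymm := by simpa [IsSymm, IsHermitian] using hM.isHermitian
  let f : (Fin n → ℝ) → ℝ := fun w ↦
    ∑ j, w j * (z j ⬝ᵥ M *ᵥ z j) - (∑ j, w j • z j) ⬝ᵥ M *ᵥ ∑ j, w j • z j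
  have hf : Continuous f := by
    refine Continuous.sub (by fun_prop) (Continuous.dotProduct (by fun_prop) ?_)
    exact Continuous.matrix_mulVec continuous_const (by fun_prop)
  obtain ⟨w, hw, hmax⟩ := (isCompact_stdSimplex ℝ (Fin n)).exists_isMaxOn
    ⟨_, single_mem_stdSimplex ℝ ⟨0, hn⟩⟩ hf.continuousOn
  refine ⟨w, hw.1, hw.2, fun i ↦ ?_⟩
  rw [trace_mul_weighted_cov]
  refine le_of_forall_le_add_mul
    (c := (z i - ∑ j, w j • z j) ⬝ᵥ M *ᵥ (z i - ∑ j, w j • z j)) fun t ht ht1 ↦ ?_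
  have hmem : (1 - t) • w + t • Pi.single i 1 ∈ stdSimplex ℝ (Fin n) :=
    convex_stdSimplex ℝ (Fin n) hw (single_mem_stdSimplex ℝ i) (by linarith) ht.le (by ring)
  have hle : f ((1 - t) • w + t • Pi.single i 1) ≤ f w := hmax hmem
  have hmean : ∑ j, ((1 - t) • w + t • Pi.single i 1 : Fin n → ℝ) j • z j =
      (1 - t) • ∑ j, w j • z j + t • z i := by
    simp [add_smul, mul_smul, sum_add_distrib, smul_sum, Pi.single_apply]
  have hquad : ∑ j, ((1 - t) • w + t • Pi.single i 1 : Fin n → ℝ) j * (z j ⬝ᵥ M *ᵥ z j) =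
      (1 - t) * ∑ j, w j * (z j ⬝ᵥ M *ᵥ z j) + t * (z i ⬝ᵥ M *ᵥ z i) := by
    simp [add_mul, mul_assoc, sum_add_distrib, mul_sum, Pi.single_apply]
  simp only [f] at hle
  rw [hmean, hquad] at hle
  generalize ∑ j, w j • z j = μ at hle ⊢
  generalize ∑ j, w j * (z j ⬝ᵥ M *ᵥ z j) = s at hle ⊢
  simp only [mulVec_add, mulVec_sub, mulVec_smul, dotProduct_add, add_dotProduct, dotProduct_sub,
    sub_dotProduct, dotProduct_smul, smul_dotProduct, smul_eq_mul,
    dotProduct_mulVec_comm_of_isSymm hsymm (z i) μ] at hle ⊢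
  refine le_of_mul_le_mul_left ?_ ht
  linarith
end

section
/- Let X₁,…,X_T be vectors in ℝ^d with ‖X_t‖₂ ≤ 1, let λ > 0, and define Γ₁ := λI and Γ_t := Γ_{t−1} + X_{t−1}X_{t−1}ᵀ for t ≥ 2. Then Σ_{t=1}^T √(tr(Γ_t⁻¹ X_t X_tᵀ)) ≤ √(T·d·(1 + 1/λ)·log(1 + T/(dλ))). -/
open Matrix Finset

/-- A positive definite matrix of order `n` with trace at most `n * m` has determinant at most
`m ^ n`, in logarithmic form. -/
theorem Matrix.PosDef.log_det_le {n : Type*} [Fintype n] [DecidableEq n] {A : Matrix n n ℝ}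
    (hA : A.PosDef) {m : ℝ} (hm : 0 < m) (htr : A.trace ≤ Fintype.card n * m) :
    Real.log A.det ≤ Fintype.card n * Real.log m := by
  have hdet : A.det = ∏ i, hA.1.eigenvalues i := by
    simpa using hA.1.det_eq_prod_eigenvalues
  have htrace : A.trace = ∑ i, hA.1.eigenvalues i := by
    simpa using hA.1.trace_eq_sum_eigenvalues
  have hlog : ∀ i, Real.log (hA.1.eigenvalues i) ≤
      Real.log m + (hA.1.eigenvalues i / m - 1) := fun i => by
    have h := Real.log_le_sub_one_of_pos (div_pos (hA.eigenvalues_pos i) hm)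
    rw [Real.log_div (hA.eigenvalues_pos i).ne' hm.ne'] at h
    linarith
  have hdiv : A.trace / m ≤ Fintype.card n := (div_le_iff₀ hm).2 htr
  rw [hdet, Real.log_prod fun i _ => (hA.eigenvalues_pos i).ne']
  calc ∑ i, Real.log (hA.1.eigenvalues i)
      ≤ ∑ i, (Real.log m + (hA.1.eigenvalues i / m - 1)) := sum_le_sum fun i _ => hlog i
    _ = Fintype.card n * Real.log m + (A.trace / m - Fintype.card n) := by
      rw [htrace, sum_add_distrib, sum_sub_distrib, ← sum_div]
      simp
    _ ≤ Fintype.card n * Real.log m := by linarith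

theorem Matrix.trace_mul_vecMulVec {n R : Type*} [Fintype n] [CommSemiring R]
    (A : Matrix n n R) (x y : n → R) :
    (A * vecMulVec x y).trace = y ⬝ᵥ A *ᵥ x := by
  rw [mul_vecMulVec, trace_vecMulVec, dotProduct_comm]

/-- The matrix determinant lemma for a rank-one update. -/
theorem Matrix.det_add_vecMulVec {n R : Type*} [Fintype n] [DecidableEq n] [CommRing R]
    {A : Matrix n n R} (hA : IsUnit A.det) (x y : n → R) :
    (A + vecMulVec x y).det = A.det * (1 + (A⁻¹ * vecMulVec x y).trace) := by
  rw [vecMulVec_eq Unit, det_add_replicateCol_mul_replicateRow hA, ← vecMulVec_eq,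
    trace_mul_vecMulVec]
  rw [det_unique (n := Unit), Matrix.mul_assoc, ← replicateCol_mulVec]
  simp [replicateRow_mul_replicateCol_apply]

/-- If `A ≥ c I` and `‖x‖ ≤ 1`, then `xᵀ A⁻¹ x ≤ 1 / c`. -/
theorem Matrix.dotProduct_inv_mulVec_le {n : Type*} [Fintype n] [DecidableEq n]
    {A : Matrix n n ℝ} (hA : IsUnit A.det) {c : ℝ} (hc : 0 < c)
    (hcA : ∀ v : n → ℝ, c * (v ⬝ᵥ v) ≤ v ⬝ᵥ A *ᵥ v) {x : n → ℝ} (hx : x ⬝ᵥ x ≤ 1) :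
    x ⬝ᵥ A⁻¹ *ᵥ x ≤ 1 / c := by
  set v := A⁻¹ *ᵥ x with hv
  have hAv : A *ᵥ v = x := by
    rw [hv, mulVec_mulVec, mul_nonsing_inv A hA, one_mulVec]
  have hlow := hcA v
  rw [hAv, dotProduct_comm v x] at hlow
  have hcs : (x ⬝ᵥ v) ^ 2 ≤ (x ⬝ᵥ x) * (v ⬝ᵥ v) := by
    simpa [dotProduct, sq] using sum_mul_sq_le_sq_mul_sq univ x v
  have hvv : 0 ≤ v ⬝ᵥ v := by simpa using dotProduct_star_self_nonneg v
  rw [le_div_iff₀ hc]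
  by_contra! h
  have hpos : 0 < x ⬝ᵥ v := pos_of_mul_pos_left (one_pos.trans h) hc.le
  have hsq : (x ⬝ᵥ v) ^ 2 ≤ v ⬝ᵥ v := hcs.trans (mul_le_of_le_one_left hvv hx)
  nlinarith [mul_le_mul_of_nonneg_left hsq hc.le, mul_lt_mul_of_pos_left h hpos]

theorem le_one_add_mul_log_one_add {y b : ℝ} (hy : 0 ≤ y) (hyb : y ≤ b) :
    y ≤ (1 + b) * Real.log (1 + y) := by
  have hpos : 0 < 1 + y := by linarith
  have h := Real.one_sub_inv_le_log_of_pos hpos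
  have hlog : 0 ≤ Real.log (1 + y) := Real.log_nonneg (by linarith)
  calc y = (1 + y) * (1 - (1 + y)⁻¹) := by field_simp; ring
    _ ≤ (1 + y) * Real.log (1 + y) := by gcongr
    _ ≤ (1 + b) * Real.log (1 + y) := by gcongr

/-- **Potential argument.**
Let `X₁, …, X_T ∈ ℝ^d` with `‖X_t‖₂ ≤ 1`, let `λ > 0`, and define `Γ₁ = λI`,
`Γ_{t+1} = Γ_t + X_t X_tᵀ`.  Then
`∑_{t=1}^T √(tr(Γ_t⁻¹ X_t X_tᵀ)) ≤ √(T d (1 + 1/λ) log(1 + T/(dλ)))`.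
(Indices are shifted so that rounds are `0, …, T−1` and `Γ 0 = λI`.) -/
theorem stmt_8 {d : ℕ} (hd : 0 < d) (T : ℕ) (lam : ℝ) (hlam : 0 < lam)
    (X : ℕ → (Fin d → ℝ)) (hX : ∀ t, Real.sqrt (X t ⬝ᵥ X t) ≤ 1)
    (Γ : ℕ → Matrix (Fin d) (Fin d) ℝ)
    (hΓ0 : Γ 0 = lam • (1 : Matrix (Fin d) (Fin d) ℝ))
    (hΓ : ∀ t, Γ (t + 1) = Γ t + vecMulVec (X t) (X t)) :
    ∑ t ∈ Finset.range T, Real.sqrt (((Γ t)⁻¹ * vecMulVec (X t) (X t)).trace) ≤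
      Real.sqrt (T * d * (1 + 1 / lam) * Real.log (1 + T / (d * lam))) := by
  have hX1 : ∀ t, X t ⬝ᵥ X t ≤ 1 := fun t => by simpa using hX t
  have hpd : ∀ t, (Γ t).PosDef := by
    intro t
    induction t with
    | zero => rw [hΓ0]; exact PosDef.one.smul hlam
    | succ t ih =>
      rw [hΓ]
      exact ih.add_posSemidef (by simpa using posSemidef_vecMulVec_self_star (X t))
  have hunit : ∀ t, IsUnit (Γ t).det := fun t => (hpd t).det_pos.ne'.isUnit
  have hlow : ∀ t (v : Fin d → ℝ), lam * (v ⬝ᵥ v) ≤ v ⬝ᵥ Γ t *ᵥ v := by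
    intro t v
    induction t with
    | zero => simp [hΓ0, smul_mulVec]
    | succ t ih =>
      rw [hΓ, add_mulVec, dotProduct_add]
      have h : 0 ≤ v ⬝ᵥ vecMulVec (X t) (X t) *ᵥ v := by
        simpa using (posSemidef_vecMulVec_self_star (X t)).dotProduct_mulVec_nonneg v
      linarith
  have htr : ∀ t, (Γ t).trace ≤ d * lam + t := by
    intro t
    induction t with
    | zero => simp [hΓ0, mul_comm]
    | succ t ih =>
      rw [hΓ, trace_add, trace_vecMulVec]
      push_cast
      linarith [hX1 t]
  set y : ℕ → ℝ := fun t => ((Γ t)⁻¹ * vecMulVec (X t) (X t)).trace with hy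
  have hy0 : ∀ t, 0 ≤ y t := fun t => by
    simp only [hy, trace_mul_vecMulVec]
    simpa using (hpd t).inv.posSemidef.dotProduct_mulVec_nonneg (X t)
  have hyb : ∀ t, y t ≤ 1 / lam := fun t => by
    simp only [hy, trace_mul_vecMulVec]
    exact dotProduct_inv_mulVec_le (hunit t) hlam (hlow t) (hX1 t)
  have hlogdet : ∀ t, ∑ s ∈ range t, Real.log (1 + y s) =
      Real.log (Γ t).det - d * Real.log lam := by
    intro t
    induction t with
    | zero => simp [hΓ0]
    | succ t ih =>
      rw [sum_range_succ, ih, hΓ, det_add_vecMulVec (hunit t),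
        Real.log_mul (hpd t).det_pos.ne' (by linarith [hy0 t])]
      ring
  have hd' : (0 : ℝ) < d := by exact_mod_cast hd
  have hsumlog : ∑ t ∈ range T, Real.log (1 + y t) ≤ d * Real.log (1 + T / (d * lam)) := by
    have hm : 0 < 1 + (T : ℝ) / (d * lam) := by positivity
    have h := (hpd T).log_det_le (mul_pos hlam hm) <| by
      refine (htr T).trans_eq ?_
      rw [Fintype.card_fin]
      field_simp
    rw [Fintype.card_fin, Real.log_mul hlam.ne' hm.ne'] at h
    rw [hlogdet]
    linarith
  have hsum : ∑ t ∈ range T, y t ≤ (1 + 1 / lam) * (d * Real.log (1 + T / (d * lam))) :=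
    calc ∑ t ∈ range T, y t ≤ ∑ t ∈ range T, (1 + 1 / lam) * Real.log (1 + y t) :=
          sum_le_sum fun t _ => le_one_add_mul_log_one_add (hy0 t) (hyb t)
      _ = (1 + 1 / lam) * ∑ t ∈ range T, Real.log (1 + y t) := (mul_sum ..).symm
      _ ≤ _ := by gcongr
  apply Real.le_sqrt_of_sq_le
  calc (∑ t ∈ range T, √(y t)) ^ 2 ≤ T * ∑ t ∈ range T, √(y t) ^ 2 := by
        simpa using sq_sum_le_card_mul_sum_sq (s := range T) (f := fun t => √(y t))
    _ = T * ∑ t ∈ range T, y t := by simp only [Real.sq_sqrt (hy0 _)]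
    _ ≤ T * ((1 + 1 / lam) * (d * Real.log (1 + T / (d * lam)))) := by gcongr
    _ = T * d * (1 + 1 / lam) * Real.log (1 + T / (d * lam)) := by ring
end

section
/- Let X₁,…,X_T be vectors in ℝ^d with ‖X_t‖₂ ≤ 1, let λ > 0, and define Γ₁ := λI and Γ_{t+1} := Γ_t + X_t X_tᵀ. Then Σ_{t=1}^T tr(Γ_{t+1}⁻¹ X_t X_tᵀ) ≤ log det(Γ_{T+1}) − log det(Γ₁) ≤ d·log(1 + T/(dλ)). -/
open Matrix Finset

/-- Matrix determinant lemma for subtracting a rank-one term, with the quadratic form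
written as a trace. -/
lemma det_sub_vecMulVec {n : Type*} [Fintype n] [DecidableEq n] {B : Matrix n n ℝ}
    (hB : IsUnit B.det) (x y : n → ℝ) :
    (B - vecMulVec x y).det = B.det * (1 - (B⁻¹ * vecMulVec x y).trace) := by
  have hfactor : B - vecMulVec x y = B * (1 - vecMulVec (B⁻¹ *ᵥ x) y) := by
    rw [Matrix.mul_sub, Matrix.mul_one, ← mul_vecMulVec, ← Matrix.mul_assoc,
      mul_nonsing_inv _ hB, Matrix.one_mul]
  rw [hfactor, det_mul, mul_vecMulVec, trace_vecMulVec, vecMulVec_eq Unit,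
    det_one_sub_mul_comm]
  simp [Matrix.mul_apply, dotProduct, mul_comm]

/-- A rank-one update increases the log-determinant by at least the trace of the
update against the inverse of the updated matrix. -/
lemma trace_inv_mul_vecMulVec_le_log_det_sub {n : Type*} [Fintype n] [DecidableEq n]
    {A : Matrix n n ℝ} (hA : A.PosDef) (x : n → ℝ) :
    ((A + vecMulVec x x)⁻¹ * vecMulVec x x).trace ≤
      Real.log (A + vecMulVec x x).det - Real.log A.det := by
  have hB : (A + vecMulVec x x).PosDef :=
    hA.add_posSemidef (by simpa using posSemidef_vecMulVec_self_star x)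
  have hdet := det_sub_vecMulVec (isUnit_iff_ne_zero.mpr hB.det_pos.ne') x x
  rw [add_sub_cancel_right] at hdet
  have hpos := (mul_pos_iff_of_pos_left hB.det_pos).mp (hdet ▸ hA.det_pos)
  have hlog := congrArg Real.log hdet
  rw [Real.log_mul hB.det_pos.ne' hpos.ne'] at hlog
  linarith [Real.log_le_sub_one_of_pos hpos]

/-- The arithmetic-geometric mean inequality for the eigenvalues of a positive definite
matrix, in logarithmic form. -/
lemma log_det_le_card_mul_log_trace_div_card {n : Type*} [Fintype n] [DecidableEq n]
    [Nonempty n] {A : Matrix n n ℝ} (hA : A.PosDef) :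
    Real.log A.det ≤ Fintype.card n * Real.log (A.trace / Fintype.card n) := by
  have hcard : (0 : ℝ) < Fintype.card n := by exact_mod_cast Fintype.card_pos
  have htrace : 0 < A.trace := hA.trace_pos
  set m := A.trace / Fintype.card n with hm
  have hmpos : 0 < m := div_pos htrace hcard
  have hsum : ∑ i, hA.1.eigenvalues i = A.trace := by
    simpa using hA.1.trace_eq_sum_eigenvalues.symm
  have hdet : A.det = ∏ i, hA.1.eigenvalues i := by
    simpa using hA.1.det_eq_prod_eigenvalues
  rw [hdet, Real.log_prod fun i _ => (hA.eigenvalues_pos i).ne']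
  calc ∑ i, Real.log (hA.1.eigenvalues i)
      ≤ ∑ i, (hA.1.eigenvalues i / m - 1 + Real.log m) := by
        refine Finset.sum_le_sum fun i _ => ?_
        have h := Real.log_le_sub_one_of_pos (div_pos (hA.eigenvalues_pos i) hmpos)
        rw [Real.log_div (hA.eigenvalues_pos i).ne' hmpos.ne'] at h
        linarith
    _ = Fintype.card n * Real.log m := by
        have hratio : A.trace / m = Fintype.card n := by
          rw [hm]; field_simp
        rw [Finset.sum_add_distrib, Finset.sum_sub_distrib, ← Finset.sum_div, hsum, hratio]
        simp

/-- **Telescoping determinant bound.**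
Let `X₁, …, X_T ∈ ℝ^d` with `‖X_t‖₂ ≤ 1`, `λ > 0`, `Γ₁ = λI`, `Γ_{t+1} = Γ_t + X_t X_tᵀ`.
Then `∑_{t=1}^T tr(Γ_{t+1}⁻¹ X_t X_tᵀ) ≤ log det Γ_{T+1} − log det Γ₁ ≤ d log(1 + T/(dλ))`.
(Indices are shifted so that rounds are `0, …, T−1` and `Γ 0 = λI`.) -/
theorem stmt_9 {d : ℕ} (hd : 0 < d) (T : ℕ) (lam : ℝ) (hlam : 0 < lam)
    (X : ℕ → (Fin d → ℝ)) (hX : ∀ t, Real.sqrt (X t ⬝ᵥ X t) ≤ 1)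
    (Γ : ℕ → Matrix (Fin d) (Fin d) ℝ)
    (hΓ0 : Γ 0 = lam • (1 : Matrix (Fin d) (Fin d) ℝ))
    (hΓ : ∀ t, Γ (t + 1) = Γ t + vecMulVec (X t) (X t)) :
    (∑ t ∈ Finset.range T, ((Γ (t + 1))⁻¹ * vecMulVec (X t) (X t)).trace ≤
        Real.log (Γ T).det - Real.log (Γ 0).det) ∧
      Real.log (Γ T).det - Real.log (Γ 0).det ≤ d * Real.log (1 + T / (d * lam)) := by
  have hpos : ∀ t, (Γ t).PosDef := by
    intro t
    induction t with
    | zero => rw [hΓ0]; exact PosDef.one.smul hlam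
    | succ t ih =>
      rw [hΓ]
      exact ih.add_posSemidef (by simpa using posSemidef_vecMulVec_self_star (X t))
  have htrace : ∀ t : ℕ, (Γ t).trace ≤ d * lam + t := by
    intro t
    induction t with
    | zero => simp [hΓ0, mul_comm]
    | succ t ih =>
      have hXt : X t ⬝ᵥ X t ≤ 1 := by simpa using Real.sqrt_le_iff.mp (hX t)
      rw [hΓ, trace_add, trace_vecMulVec]
      push_cast
      linarith
  constructor
  · rw [← Finset.sum_range_sub fun t => Real.log (Γ t).det]
    refine Finset.sum_le_sum fun t _ => ?_
    rw [hΓ]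
    exact trace_inv_mul_vecMulVec_le_log_det_sub (hpos t) (X t)
  · have : Nonempty (Fin d) := ⟨⟨0, hd⟩⟩
    have hdpos : (0 : ℝ) < d := by exact_mod_cast hd
    have hdet0 : Real.log (Γ 0).det = d * Real.log lam := by simp [hΓ0]
    have hdetT := log_det_le_card_mul_log_trace_div_card (hpos T)
    rw [Fintype.card_fin] at hdetT
    have hmean : (Γ T).trace / d ≤ lam * (1 + T / (d * lam)) := by
      rw [div_le_iff₀ hdpos]
      refine (htrace T).trans_eq ?_
      field_simp
    have hlog := Real.log_le_log (div_pos (hpos T).trace_pos hdpos) hmean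
    rw [Real.log_mul hlam.ne' (by positivity)] at hlog
    have := mul_le_mul_of_nonneg_left hlog hdpos.le
    linarith
end

section
/- Consider the semiparametric contextual bandit problem with two actions under the environment and boundedness assumptions, where at each round t the learner samples a_t from a distribution π_t that either places all mass on a single action or is uniform over the two actions, with π_t depending measurably on the history. Let γ(T) := √λ + √(9d·log(1 + T/(dλ)) + 18·log(T/δ)). Then for any δ ∈ (0,1), with probability at least 1 − δ, the orthogonalized estimator satisfies ‖θ̂_t − θ‖_{Γ_t} ≤ γ(T) simultaneously for all t ∈ [T]. -/
open MeasureTheory ProbabilityTheory Matrix Finset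

/-- Conditionally independent real random variables have multiplicative conditional expectation. -/
lemma condExp_mul_of_condIndepFun {Ω : Type*} {m m0 : MeasurableSpace Ω}
    [StandardBorelSpace Ω] [Nonempty Ω] {μ : Measure Ω} [IsFiniteMeasure μ] (hm : m ≤ m0)
    {f g : Ω → ℝ} (hf : Measurable f) (hg : Measurable g) (hfi : Integrable f μ)
    (hgi : Integrable g μ) (hfgi : Integrable (f * g) μ) (h : CondIndepFun m hm f g μ) :
    μ[f * g | m] =ᵐ[μ] μ[f | m] * μ[g | m] := by
  have hprod := ae_of_ae_trim hm ((condIndepFun_iff_map_prod_eq_prod_map_map hf hg).1 h)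
  filter_upwards [hprod, condExp_ae_eq_integral_condExpKernel hm hfi,
    condExp_ae_eq_integral_condExpKernel hm hgi,
    condExp_ae_eq_integral_condExpKernel hm hfgi] with ω hω h1 h2 h3
  rw [Pi.mul_apply, h1, h2, h3]
  rw [Kernel.map_apply _ (hf.prodMk hg), Kernel.prod_apply, Kernel.map_apply _ hf,
    Kernel.map_apply _ hg] at hω
  have key : ∫ y, (f * g) y ∂(condExpKernel μ m ω)
      = ∫ p : ℝ × ℝ, p.1 * p.2 ∂((condExpKernel μ m ω).map fun y ↦ (f y, g y)) := by
    rw [integral_map (hf.prodMk hg).aemeasurable (by fun_prop)]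
    rfl
  rw [key, hω, integral_prod_mul (fun x : ℝ ↦ x) (fun y : ℝ ↦ y),
    integral_map hf.aemeasurable (by fun_prop), integral_map hg.aemeasurable (by fun_prop)]

lemma exp_mul_le_of_abs_le {s x c : ℝ} (hc : 0 < c) (hx : |x| ≤ c) :
    Real.exp (s * x - c ^ 2 / 2 * s ^ 2)
      ≤ 1 + Real.exp (-(c ^ 2 / 2 * s ^ 2)) * Real.sinh (c * s) / c * x := by
  obtain ⟨h1, h2⟩ := abs_le.1 hx
  have hconv := convexOn_exp.2 (Set.mem_univ (c * s)) (Set.mem_univ (-(c * s)))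
    (show 0 ≤ (c + x) / (2 * c) by apply div_nonneg <;> linarith)
    (show 0 ≤ (c - x) / (2 * c) by apply div_nonneg <;> linarith) (by field_simp; ring)
  have harg : ((c + x) / (2 * c)) • (c * s) + ((c - x) / (2 * c)) • (-(c * s)) = s * x := by
    simp only [smul_eq_mul]; field_simp; ring
  rw [harg] at hconv
  have hrhs : ((c + x) / (2 * c)) • Real.exp (c * s) + ((c - x) / (2 * c)) • Real.exp (-(c * s))
      = Real.cosh (c * s) + Real.sinh (c * s) / c * x := by
    rw [Real.cosh_eq, Real.sinh_eq]; simp only [smul_eq_mul]; field_simp; ring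
  rw [hrhs] at hconv
  have hcosh := Real.cosh_le_exp_half_sq (c * s)
  rw [sub_eq_add_neg, Real.exp_add]
  set E := Real.exp (-(c ^ 2 / 2 * s ^ 2)) with hE
  have hE0 : 0 < E := Real.exp_pos _
  have hEE : Real.exp ((c * s) ^ 2 / 2) * E = 1 := by
    rw [hE, ← Real.exp_add]; simp; ring
  calc Real.exp (s * x) * E ≤ (Real.cosh (c * s) + Real.sinh (c * s) / c * x) * E := by gcongr
    _ ≤ (Real.exp ((c * s) ^ 2 / 2) + Real.sinh (c * s) / c * x) * E := by gcongr
    _ = _ := by rw [add_mul, hEE]; ring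

open scoped MatrixOrder Matrix.Norms.L2Operator in
lemma Matrix.PosSemidef.exists_eq_transpose_mul_self {n : Type*} [Fintype n] [DecidableEq n]
    {M : Matrix n n ℝ} (hM : M.PosSemidef) : ∃ B : Matrix n n ℝ, M = Bᵀ * B := by
  obtain ⟨B, hB⟩ := CStarAlgebra.nonneg_iff_eq_star_mul_self.mp hM.nonneg
  exact ⟨B, by rw [hB, star_eq_conjTranspose, conjTranspose_eq_transpose_of_trivial]⟩

/-- AM-GM for the eigenvalues, in logarithmic form. -/
lemma Matrix.PosDef.log_det_le_s13 {d : ℕ} {M : Matrix (Fin d) (Fin d) ℝ}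
    (hM : M.PosDef) {c : ℝ} (hc : 0 < c) (htr : M.trace ≤ d * c) :
    Real.log M.det ≤ d * Real.log c := by
  rw [hM.isHermitian.det_eq_prod_eigenvalues]
  rw [hM.isHermitian.trace_eq_sum_eigenvalues] at htr
  simp only [RCLike.ofReal_real_eq_id, id] at htr ⊢
  rw [Real.log_prod fun i _ ↦ (hM.eigenvalues_pos i).ne']
  have hterm : ∀ i, Real.log (hM.isHermitian.eigenvalues i)
      ≤ hM.isHermitian.eigenvalues i / c - 1 + Real.log c := fun i ↦ by
    have := Real.log_le_sub_one_of_pos (div_pos (hM.eigenvalues_pos i) hc)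
    rw [Real.log_div (hM.eigenvalues_pos i).ne' hc.ne'] at this
    linarith
  refine (Finset.sum_le_sum fun i _ ↦ hterm i).trans ?_
  rw [Finset.sum_add_distrib, Finset.sum_sub_distrib, ← Finset.sum_div]
  have : (∑ i, hM.isHermitian.eigenvalues i) / c ≤ d := by rwa [div_le_iff₀ hc]
  simp only [Finset.sum_const, Finset.card_univ, Fintype.card_fin, nsmul_eq_mul]
  linarith

/-- The Gaussian integral with quadratic form `M` and linear term `v`, relative to the standard
one. -/
lemma lintegral_exp_quadratic {d : ℕ} {M : Matrix (Fin d) (Fin d) ℝ} (hM : M.PosDef)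
    (v : Fin d → ℝ) {c : ℝ} (hc : 0 < c) :
    ∫⁻ w : Fin d → ℝ, ENNReal.ofReal (Real.exp (w ⬝ᵥ v - c / 2 * (w ⬝ᵥ M *ᵥ w)))
      = ENNReal.ofReal (Real.exp (v ⬝ᵥ M⁻¹ *ᵥ v / (2 * c)) / √M.det)
        * ∫⁻ w : Fin d → ℝ, ENNReal.ofReal (Real.exp (-(c / 2) * (w ⬝ᵥ w))) := by
  obtain ⟨B, hB⟩ := hM.posSemidef.exists_eq_transpose_mul_self
  have hdet : M.det = B.det ^ 2 := by rw [hB, det_mul, det_transpose, sq]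
  have hB0 : B.det ≠ 0 := by
    intro h; have := hM.det_pos; simp [hdet, h] at this
  have hMu : IsUnit M.det := hM.det_pos.ne'.isUnit
  have hsymm : Mᵀ = M := by simp [hB]
  have hquad : ∀ w, w ⬝ᵥ M *ᵥ w = (B *ᵥ w) ⬝ᵥ (B *ᵥ w) := fun w ↦ by
    rw [hB, ← mulVec_mulVec, dotProduct_mulVec, vecMul_transpose]
  set p := c⁻¹ • (M⁻¹ *ᵥ v) with hp
  have hMp : M *ᵥ p = c⁻¹ • v := by
    rw [hp, mulVec_smul, mulVec_mulVec, mul_nonsing_inv _ hMu, one_mulVec]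
  have hsq : ∀ w, (w + p) ⬝ᵥ v - c / 2 * ((w + p) ⬝ᵥ M *ᵥ (w + p))
      = v ⬝ᵥ M⁻¹ *ᵥ v / (2 * c) + -(c / 2) * ((B *ᵥ w) ⬝ᵥ (B *ᵥ w)) := fun w ↦ by
    have h1 : p ⬝ᵥ M *ᵥ w = c⁻¹ * (w ⬝ᵥ v) := by
      rw [dotProduct_mulVec, ← mulVec_transpose, hsymm, hMp, smul_dotProduct, dotProduct_comm,
        smul_eq_mul]
    have h2 : p ⬝ᵥ v = c⁻¹ * (v ⬝ᵥ M⁻¹ *ᵥ v) := by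
      rw [hp, smul_dotProduct, dotProduct_comm, smul_eq_mul]
    rw [mulVec_add, add_dotProduct, add_dotProduct, dotProduct_add, dotProduct_add, h1, hMp,
      dotProduct_smul, dotProduct_smul, h2, hquad]
    simp only [smul_eq_mul]
    field_simp
    ring
  rw [← lintegral_add_right_eq_self _ p]
  simp_rw [hsq, Real.exp_add, ENNReal.ofReal_mul (Real.exp_nonneg _)]
  rw [lintegral_const_mul _ (by fun_prop)]
  have hmap := Real.map_matrix_volume_pi_eq_smul_volume_pi hB0
  have hintegral : ∫⁻ w : Fin d → ℝ, ENNReal.ofReal (Real.exp (-(c / 2) * ((B *ᵥ w) ⬝ᵥ (B *ᵥ w))))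
      = ENNReal.ofReal |B.det⁻¹| *
        ∫⁻ w : Fin d → ℝ, ENNReal.ofReal (Real.exp (-(c / 2) * (w ⬝ᵥ w))) := by
    rw [← smul_eq_mul, ← lintegral_smul_measure, ← hmap, lintegral_map]
    · simp
    · unfold dotProduct; fun_prop
    · exact (Matrix.toLin' B).continuous_of_finiteDimensional.measurable
  rw [hintegral, ← mul_assoc, ← ENNReal.ofReal_mul (Real.exp_nonneg _), hdet, Real.sqrt_sq_eq_abs,
    abs_inv, ← div_eq_mul_inv]

lemma lintegral_exp_neg_dotProduct_ne_top {d : ℕ} {c : ℝ} (hc : 0 < c) :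
    ∫⁻ w : Fin d → ℝ, ENNReal.ofReal (Real.exp (-c * (w ⬝ᵥ w))) ≠ ⊤ := by
  have hi : Integrable (fun w : Fin d → ℝ ↦ ∏ i, Real.exp (-c * w i ^ 2)) :=
    Integrable.fintype_prod fun _ ↦ integrable_exp_neg_mul_sq hc
  have heq : (fun w : Fin d → ℝ ↦ Real.exp (-c * (w ⬝ᵥ w)))
      = fun w ↦ ∏ i, Real.exp (-c * w i ^ 2) := by
    ext w
    rw [← Real.exp_sum, dotProduct, Finset.mul_sum]
    simp_rw [sq]
  rw [← heq] at hi
  rw [← ofReal_integral_eq_lintegral_ofReal hi (ae_of_all _ fun _ ↦ Real.exp_nonneg _)]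
  exact ENNReal.ofReal_ne_top

lemma lintegral_exp_neg_dotProduct_ne_zero {d : ℕ} (c : ℝ) :
    ∫⁻ w : Fin d → ℝ, ENNReal.ofReal (Real.exp (-c * (w ⬝ᵥ w))) ≠ 0 := by
  rw [ne_eq, lintegral_eq_zero_iff (by unfold dotProduct; fun_prop)]
  intro h
  obtain ⟨w, hw⟩ := h.exists
  have := Real.exp_pos (-c * (w ⬝ᵥ w))
  simp only [Pi.zero_apply, ENNReal.ofReal_eq_zero] at hw
  linarith

lemma dotProduct_sq_le {n : Type*} [Fintype n] (x y : n → ℝ) :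
    (x ⬝ᵥ y) ^ 2 ≤ (x ⬝ᵥ x) * (y ⬝ᵥ y) := by
  simpa only [dotProduct, sq] using Finset.sum_mul_sq_le_sq_mul_sq univ x y

lemma real_dotProduct_self_nonneg {n : Type*} [Fintype n] (x : n → ℝ) : 0 ≤ x ⬝ᵥ x :=
  Finset.sum_nonneg fun _ _ ↦ mul_self_nonneg _

lemma integral_mul_eq_zero_of_condExp_eq_zero {Ω : Type*} {m m0 : MeasurableSpace Ω}
    {μ : Measure Ω} [IsFiniteMeasure μ] (hm : m ≤ m0) {H X : Ω → ℝ} {C : ℝ}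
    (hH : Measurable[m] H) (hHC : ∀ ω, |H ω| ≤ C) (hX : Integrable X μ)
    (hX0 : μ[X | m] =ᵐ[μ] 0) : ∫ ω, H ω * X ω ∂μ = 0 := by
  have h := condExp_stronglyMeasurable_mul_of_bound hm hH.stronglyMeasurable hX C (ae_of_all _ hHC)
  calc ∫ ω, H ω * X ω ∂μ = ∫ ω, (μ[H * X | m]) ω ∂μ := (integral_condExp hm).symm
    _ = ∫ _, (0 : ℝ) ∂μ := by
        refine integral_congr_ae ?_
        filter_upwards [h, hX0] with ω h1 h2
        simp [h1, h2]
    _ = 0 := by simp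

/-- The exponential process of a bounded, predictably weighted martingale difference sequence has
expectation at most one. -/
lemma lintegral_exp_sum_le_one {Ω : Type*} {m0 : MeasurableSpace Ω} {μ : Measure Ω}
    [IsProbabilityMeasure μ] (ℱ : Filtration ℕ m0) {s X : ℕ → Ω → ℝ} {c K : ℝ} (hc : 0 < c)
    (hs : ∀ t, Measurable[ℱ t] (s t)) (hsK : ∀ t ω, |s t ω| ≤ K)
    (hX : ∀ t, Measurable[ℱ (t + 1)] (X t)) (hXc : ∀ t ω, |X t ω| ≤ c)
    (hX0 : ∀ t, μ[X t | ℱ t] =ᵐ[μ] 0) (t : ℕ) :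
    ∫⁻ ω, ENNReal.ofReal
      (Real.exp (∑ τ ∈ range t, (s τ ω * X τ ω - c ^ 2 / 2 * s τ ω ^ 2))) ∂μ ≤ 1 := by
  set L : ℕ → Ω → ℝ := fun t ω ↦
    Real.exp (∑ τ ∈ range t, (s τ ω * X τ ω - c ^ 2 / 2 * s τ ω ^ 2)) with hL
  have hLm : ∀ t, Measurable[ℱ t] (L t) := fun t ↦ by
    refine Real.measurable_exp.comp (Finset.measurable_fun_sum _ fun τ hτ ↦ ?_)
    have hτ' := Finset.mem_range.1 hτ
    have h1 : Measurable[ℱ t] (s τ) := (hs τ).mono (ℱ.mono hτ'.le) le_rfl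
    have h2 : Measurable[ℱ t] (X τ) := (hX τ).mono (ℱ.mono hτ') le_rfl
    exact (h1.mul h2).sub ((h1.pow_const 2).const_mul _)
  have hLb : ∀ t ω, |L t ω| ≤ Real.exp (t * (K * c)) := fun t ω ↦ by
    rw [abs_of_nonneg (Real.exp_nonneg _), Real.exp_le_exp]
    calc _ ≤ ∑ _τ ∈ range t, K * c := by
          refine Finset.sum_le_sum fun τ _ ↦ ?_
          have h1 : s τ ω * X τ ω ≤ K * c := by
            refine (le_abs_self _).trans ?_
            rw [abs_mul]
            exact mul_le_mul (hsK τ ω) (hXc τ ω) (abs_nonneg _) ((abs_nonneg _).trans (hsK τ ω))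
          have h2 : 0 ≤ c ^ 2 / 2 * s τ ω ^ 2 := by positivity
          linarith
      _ = _ := by simp
  have hLi : ∀ t, Integrable (L t) μ := fun t ↦
    Integrable.of_bound ((hLm t).mono (ℱ.le t) le_rfl).aestronglyMeasurable _
      (ae_of_all _ (hLb t))
  have hXi : ∀ t, Integrable (X t) μ := fun t ↦
    Integrable.of_bound ((hX t).mono (ℱ.le (t + 1)) le_rfl).aestronglyMeasurable _
      (ae_of_all _ (hXc t))
  have hintegral : ∀ t, ∫ ω, L t ω ∂μ ≤ 1 := by
    intro t
    induction t with
    | zero => simp [hL]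
    | succ t ih =>
      set H : Ω → ℝ := fun ω ↦
        L t ω * (Real.exp (-(c ^ 2 / 2 * s t ω ^ 2)) * Real.sinh (c * s t ω) / c) with hH
      have hHm : Measurable[ℱ t] H := by
        have h1 := hs t
        refine (hLm t).mul (Measurable.div_const (Measurable.mul ?_ ?_) _)
        · exact Real.measurable_exp.comp ((h1.pow_const 2).const_mul _).neg
        · exact Real.measurable_sinh.comp (h1.const_mul _)
      have hHb : ∀ ω, |H ω| ≤ Real.exp (t * (K * c)) * (1 * Real.cosh (c * K) / c) := fun ω ↦ by
        rw [hH, abs_mul, abs_div, abs_mul, abs_of_pos hc]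
        have he : |Real.exp (-(c ^ 2 / 2 * s t ω ^ 2))| ≤ 1 := by
          rw [abs_of_nonneg (Real.exp_nonneg _), Real.exp_le_one_iff]
          have : 0 ≤ c ^ 2 / 2 * s t ω ^ 2 := by positivity
          linarith
        have hsh : |Real.sinh (c * s t ω)| ≤ Real.cosh (c * K) := by
          have h1 : Real.cosh (c * s t ω) ≤ Real.cosh (c * K) := by
            rw [Real.cosh_le_cosh, abs_mul, abs_mul]
            exact mul_le_mul_of_nonneg_left ((hsK t ω).trans (le_abs_self K)) (abs_nonneg c)
          refine le_trans ?_ h1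
          refine abs_le_of_sq_le_sq ?_ (Real.cosh_pos _).le
          rw [Real.cosh_sq]
          linarith
        gcongr
        exact hLb t ω
      have hstep : ∀ ω, L (t + 1) ω ≤ L t ω + H ω * X t ω := fun ω ↦ by
        have h1 := exp_mul_le_of_abs_le (s := s t ω) hc (hXc t ω)
        have h2 : L (t + 1) ω
            = L t ω * Real.exp (s t ω * X t ω - c ^ 2 / 2 * s t ω ^ 2) := by
          simp only [hL]
          rw [Finset.sum_range_succ, Real.exp_add]
        rw [h2]
        refine (mul_le_mul_of_nonneg_left h1 (Real.exp_nonneg _)).trans (le_of_eq ?_)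
        simp only [hH]
        ring
      have hHX : Integrable (fun ω ↦ H ω * X t ω) μ :=
        (hXi t).bdd_mul (hHm.mono (ℱ.le t) le_rfl).aestronglyMeasurable (ae_of_all _ hHb)
      calc ∫ ω, L (t + 1) ω ∂μ ≤ ∫ ω, (L t ω + H ω * X t ω) ∂μ :=
            integral_mono (hLi _) ((hLi t).add hHX) hstep
        _ = ∫ ω, L t ω ∂μ := by
            rw [integral_add (hLi t) hHX,
              integral_mul_eq_zero_of_condExp_eq_zero (ℱ.le t) hHm hHb (hXi t) (hX0 t), add_zero]
        _ ≤ 1 := ih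
  rw [← ofReal_integral_eq_lintegral_ofReal (hLi t) (ae_of_all _ fun _ ↦ Real.exp_nonneg _)]
  exact ENNReal.ofReal_le_one.2 (hintegral t)

/-- The regularized Gram matrix of a finite family of vectors. -/
def regGram {d : ℕ} (lam : ℝ) (u : ℕ → Fin d → ℝ) (t : ℕ) : Matrix (Fin d) (Fin d) ℝ :=
  lam • (1 : Matrix (Fin d) (Fin d) ℝ) + ∑ τ ∈ range t, vecMulVec (u τ) (u τ)

lemma dotProduct_regGram_mulVec {d : ℕ} (lam : ℝ) (u : ℕ → Fin d → ℝ) (t : ℕ) (w : Fin d → ℝ) :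
    w ⬝ᵥ regGram lam u t *ᵥ w = lam * (w ⬝ᵥ w) + ∑ τ ∈ range t, (w ⬝ᵥ u τ) ^ 2 := by
  rw [regGram, add_mulVec, dotProduct_add, smul_mulVec, one_mulVec, dotProduct_smul,
    sum_mulVec, dotProduct_sum, smul_eq_mul]
  congr 1
  refine Finset.sum_congr rfl fun τ _ ↦ ?_
  rw [vecMulVec_mulVec, dotProduct_smul, dotProduct_comm (u τ) w]
  simp [sq]

lemma posDef_regGram {d : ℕ} {lam : ℝ} (hlam : 0 < lam) (u : ℕ → Fin d → ℝ) (t : ℕ) :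
    (regGram lam u t).PosDef := by
  refine PosDef.add_posSemidef (PosDef.smul PosDef.one hlam) ?_
  refine posSemidef_sum _ fun τ _ ↦ ?_
  simpa using posSemidef_vecMulVec_self_star (u τ)

lemma trace_regGram {d : ℕ} (lam : ℝ) (u : ℕ → Fin d → ℝ) (t : ℕ) :
    (regGram lam u t).trace = d * lam + ∑ τ ∈ range t, u τ ⬝ᵥ u τ := by
  simp [regGram, trace_add, trace_smul, trace_sum, trace_vecMulVec, mul_comm]

/-- Self-normalized tail bound for vector-valued martingales with bounded scalar increments,
by the method of mixtures. -/
lemma measure_selfNormalized_gt_le {Ω : Type*} {m0 : MeasurableSpace Ω} {μ : Measure Ω}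
    [IsProbabilityMeasure μ] (ℱ : Filtration ℕ m0) {d : ℕ} {lam c p : ℝ} (hlam : 0 < lam)
    (hc : 0 < c) (hp : 0 < p) {u : ℕ → Ω → Fin d → ℝ} {X : ℕ → Ω → ℝ}
    (hu : ∀ t, Measurable[ℱ t] (u t)) (hub : ∀ t ω, u t ω ⬝ᵥ u t ω ≤ 1)
    (hX : ∀ t, Measurable[ℱ (t + 1)] (X t)) (hXc : ∀ t ω, |X t ω| ≤ c)
    (hX0 : ∀ t, μ[X t | ℱ t] =ᵐ[μ] 0) (t : ℕ) :
    μ {ω | c ^ 2 * (Real.log (regGram lam (u · ω) t).det - d * Real.log lam)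
          + 2 * c ^ 2 * Real.log (1 / p)
        < (∑ τ ∈ range t, X τ ω • u τ ω) ⬝ᵥ
          (regGram lam (u · ω) t)⁻¹ *ᵥ (∑ τ ∈ range t, X τ ω • u τ ω)}
      ≤ ENNReal.ofReal p := by
  have hc2 : 0 < c ^ 2 := by positivity
  set S : Ω → Fin d → ℝ := fun ω ↦ ∑ τ ∈ range t, X τ ω • u τ ω with hS
  set V : Ω → Matrix (Fin d) (Fin d) ℝ := fun ω ↦ regGram lam (u · ω) t with hV
  have hVpos : ∀ ω, (V ω).PosDef := fun ω ↦ posDef_regGram hlam _ _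
  set G := ∫⁻ w : Fin d → ℝ, ENNReal.ofReal (Real.exp (-(c ^ 2 / 2) * (w ⬝ᵥ w))) with hG
  have hG0 : G ≠ 0 := lintegral_exp_neg_dotProduct_ne_zero _
  have hGtop : G ≠ ⊤ := lintegral_exp_neg_dotProduct_ne_top (half_pos hc2)
  set F : Ω → (Fin d → ℝ) → ENNReal := fun ω w ↦
    ENNReal.ofReal (Real.exp (w ⬝ᵥ S ω - c ^ 2 / 2 * (w ⬝ᵥ V ω *ᵥ w))) with hF
  have hFeq : ∀ ω w, F ω w = ENNReal.ofReal (Real.exp (-(c ^ 2 / 2) * (lam * (w ⬝ᵥ w))))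
      * ENNReal.ofReal (Real.exp (∑ τ ∈ range t,
        ((w ⬝ᵥ u τ ω) * X τ ω - c ^ 2 / 2 * (w ⬝ᵥ u τ ω) ^ 2))) := fun ω w ↦ by
    rw [← ENNReal.ofReal_mul (Real.exp_nonneg _), ← Real.exp_add]
    simp only [hF, hS, hV]
    rw [dotProduct_regGram_mulVec, dotProduct_sum, Finset.sum_sub_distrib, ← Finset.mul_sum]
    simp_rw [dotProduct_smul, smul_eq_mul, mul_comm (X _ ω)]
    congr 2
    ring
  have hFm : Measurable (Function.uncurry F) := by
    have hu' : ∀ τ, Measurable (u τ) := fun τ ↦ (hu τ).mono (ℱ.le τ) le_rfl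
    have hX' : ∀ τ, Measurable (X τ) := fun τ ↦ (hX τ).mono (ℱ.le (τ + 1)) le_rfl
    have : Function.uncurry F = fun q : Ω × (Fin d → ℝ) ↦ _ := funext fun q ↦ hFeq q.1 q.2
    rw [this]
    simp only [dotProduct]
    fun_prop
  have hJ : ∀ ω, ∫⁻ w, F ω w
      = ENNReal.ofReal (Real.exp (S ω ⬝ᵥ (V ω)⁻¹ *ᵥ S ω / (2 * c ^ 2)) / √(V ω).det) * G :=
    fun ω ↦ lintegral_exp_quadratic (hVpos ω) (S ω) hc2
  have hprior : ∫⁻ w : Fin d → ℝ, ENNReal.ofReal (Real.exp (-(c ^ 2 / 2) * (lam * (w ⬝ᵥ w))))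
      = ENNReal.ofReal (1 / √(lam ^ d)) * G := by
    have h := lintegral_exp_quadratic
      (PosDef.smul (PosDef.one (n := Fin d) (R := ℝ)) hlam) 0 hc2
    simpa [smul_mulVec, det_smul, hG] using h
  have hmean : ∫⁻ ω, (∫⁻ w, F ω w) ∂μ ≤ ENNReal.ofReal (1 / √(lam ^ d)) * G := by
    rw [lintegral_lintegral_swap hFm.aemeasurable, ← hprior]
    refine lintegral_mono fun w ↦ ?_
    simp_rw [hFeq]
    rw [lintegral_const_mul']
    · refine mul_le_of_le_one_right' ?_
      refine lintegral_exp_sum_le_one (K := √(w ⬝ᵥ w)) ℱ hc (s := fun τ ω ↦ w ⬝ᵥ u τ ω)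
        (fun τ ↦ ?_) (fun τ ω ↦ ?_) hX hXc hX0 t
      · have := hu τ
        simp only [dotProduct]
        refine Finset.measurable_fun_sum _ fun i _ ↦ ?_
        exact ((measurable_pi_apply i).comp this).const_mul _
      · refine Real.abs_le_sqrt ?_
        exact (dotProduct_sq_le w (u τ ω)).trans
          (mul_le_of_le_one_right (real_dotProduct_self_nonneg w) (hub τ ω))
    · exact ENNReal.ofReal_ne_top
  set ε := ENNReal.ofReal (1 / (√(lam ^ d) * p)) * G with hε
  have hsq : 0 < √(lam ^ d) := by positivity
  have hε0 : ε ≠ 0 := mul_ne_zero (by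
    rw [ne_eq, ENNReal.ofReal_eq_zero, not_le]; positivity) hG0
  have hεtop : ε ≠ ⊤ := ENNReal.mul_ne_top ENNReal.ofReal_ne_top hGtop
  have hMarkov := mul_meas_ge_le_lintegral₀ (μ := μ) (hFm.lintegral_prod_right' (ν := volume)).aemeasurable ε
  have hle : ε * μ {ω | ε ≤ ∫⁻ w, F ω w} ≤ ε * ENNReal.ofReal p := by
    refine (hMarkov.trans hmean).trans (le_of_eq ?_)
    rw [hε, mul_right_comm, ← ENNReal.ofReal_mul (by positivity)]
    congr 2
    field_simp
  refine le_trans (measure_mono fun ω hω ↦ ?_) ((ENNReal.mul_le_mul_iff_right hε0 hεtop).1 hle)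
  simp only [Set.mem_ofPred_eq] at hω ⊢
  rw [hJ, hε]
  gcongr ENNReal.ofReal ?_ * G
  have hdet := (hVpos ω).det_pos
  rw [← Real.log_le_log_iff (by positivity) (by positivity), Real.log_div (by positivity)
    (by positivity), Real.log_div (by positivity) (by positivity), Real.log_exp, Real.log_one,
    Real.log_mul (by positivity) (by positivity), Real.log_sqrt (by positivity),
    Real.log_sqrt hdet.le, Real.log_pow]
  rw [Real.log_div (by positivity) (by positivity), Real.log_one] at hω
  have hω2 := (lt_div_iff₀' (show 0 < 2 * c ^ 2 by positivity)).2
    (show 2 * c ^ 2 * ((Real.log (V ω).det - d * Real.log lam) / 2 - Real.log p)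
      < S ω ⬝ᵥ (V ω)⁻¹ *ᵥ S ω by linarith)
  linarith

lemma Matrix.PosSemidef.sqrt_quadratic_add_le {n : Type*} [Fintype n] [DecidableEq n]
    {M : Matrix n n ℝ} (hM : M.PosSemidef) (x y : n → ℝ) :
    √((x + y) ⬝ᵥ M *ᵥ (x + y)) ≤ √(x ⬝ᵥ M *ᵥ x) + √(y ⬝ᵥ M *ᵥ y) := by
  obtain ⟨B, hB⟩ := hM.exists_eq_transpose_mul_self
  have hnorm : ∀ w, √(w ⬝ᵥ M *ᵥ w) = ‖WithLp.toLp 2 (B *ᵥ w)‖ := fun w ↦ by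
    rw [hB, ← mulVec_mulVec, dotProduct_mulVec, vecMul_transpose, EuclideanSpace.norm_eq]
    simp [dotProduct, sq]
  rw [hnorm, hnorm, hnorm, mulVec_add, WithLp.toLp_add]
  exact norm_add_le _ _

lemma sqrt_quadratic_inv_regGram_le {d : ℕ} {lam : ℝ} (hlam : 0 < lam) (u : ℕ → Fin d → ℝ)
    (t : ℕ) {θ : Fin d → ℝ} (hθ : θ ⬝ᵥ θ ≤ 1) (S : Fin d → ℝ) :
    √(((regGram lam u t)⁻¹ *ᵥ (S - lam • θ)) ⬝ᵥ
        regGram lam u t *ᵥ ((regGram lam u t)⁻¹ *ᵥ (S - lam • θ)))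
      ≤ √lam + √(S ⬝ᵥ (regGram lam u t)⁻¹ *ᵥ S) := by
  set M := regGram lam u t with hMdef
  have hM : M.PosDef := posDef_regGram hlam u t
  have hcancel : ∀ v, M *ᵥ (M⁻¹ *ᵥ v) = v := fun v ↦ by
    rw [mulVec_mulVec, mul_nonsing_inv _ hM.det_pos.ne'.isUnit, one_mulVec]
  have htri := hM.posSemidef.sqrt_quadratic_add_le (M⁻¹ *ᵥ S) (M⁻¹ *ᵥ (-(lam • θ)))
  rw [← mulVec_add, ← sub_eq_add_neg] at htri
  refine htri.trans ?_
  rw [add_comm, hcancel, hcancel, dotProduct_comm _ S]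
  gcongr
  set y := M⁻¹ *ᵥ θ with hy
  have hquad : y ⬝ᵥ M *ᵥ y = y ⬝ᵥ θ := by rw [hcancel]
  have hlow : lam * (y ⬝ᵥ y) ≤ y ⬝ᵥ θ := by
    rw [← hquad, hMdef, dotProduct_regGram_mulVec]
    exact le_add_of_nonneg_right (Finset.sum_nonneg fun _ _ ↦ sq_nonneg _)
  have hCS := dotProduct_sq_le y θ
  have hyy := real_dotProduct_self_nonneg y
  have hval : (M⁻¹ *ᵥ (-(lam • θ))) ⬝ᵥ (-(lam • θ)) = lam * (lam * (y ⬝ᵥ θ)) := by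
    rw [mulVec_neg, mulVec_smul, neg_dotProduct_neg, smul_dotProduct, dotProduct_smul]
    rfl
  rw [hval]
  refine mul_le_of_le_one_right hlam.le ?_
  have h1 : (y ⬝ᵥ θ) ^ 2 ≤ y ⬝ᵥ y := hCS.trans (mul_le_of_le_one_right hyy hθ)
  by_contra! h
  nlinarith [mul_le_mul_of_nonneg_left h1 hlam.le]

lemma log_det_regGram_sub_le {d : ℕ} (hd : 0 < d) {lam : ℝ} (hlam : 0 < lam)
    {u : ℕ → Fin d → ℝ} (hu : ∀ τ, u τ ⬝ᵥ u τ ≤ 1) {t T : ℕ} (htT : t ≤ T) :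
    Real.log (regGram lam u t).det - d * Real.log lam
      ≤ d * Real.log (1 + T / (d * lam)) := by
  have hd' : (0 : ℝ) < d := by exact_mod_cast hd
  have hsum : ∑ τ ∈ range t, u τ ⬝ᵥ u τ ≤ T := by
    refine (Finset.sum_le_sum fun τ _ ↦ hu τ).trans ?_
    simpa using htT
  have h := (posDef_regGram hlam u t).log_det_le_s13 (c := lam + T / d) (by positivity) (by
    rw [trace_regGram, mul_add, mul_div_cancel₀ _ hd'.ne']
    linarith)
  have hfac : lam + T / d = lam * (1 + T / (d * lam)) := by field_simp
  rw [hfac, Real.log_mul hlam.ne' (by positivity)] at h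
  linarith

/-- An event of conditional probability zero a.s. does not occur. -/
lemma ae_ne_zero_of_condExp_ite_eq {Ω : Type*} {m m0 : MeasurableSpace Ω} {μ : Measure Ω}
    [IsFiniteMeasure μ] (hm : m ≤ m0) {P : Ω → Prop} [DecidablePred P]
    (hP : MeasurableSet {ω | P ω}) {q : Ω → ℝ} (hq : Measurable[m] q)
    (hlaw : μ[(fun ω ↦ if P ω then (1 : ℝ) else 0) | m] =ᵐ[μ] q) :
    ∀ᵐ ω ∂μ, P ω → q ω ≠ 0 := by
  set Y : Ω → ℝ := fun ω ↦ if P ω then (1 : ℝ) else 0 with hY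
  have hYi : Integrable Y μ :=
    Integrable.of_bound (Measurable.ite hP measurable_const measurable_const).aestronglyMeasurable
      1 (ae_of_all _ fun ω ↦ by simp only [hY]; split_ifs <;> simp)
  have hset : MeasurableSet[m] {ω | q ω = 0} := hq (measurableSet_singleton 0)
  have hzero : ∫ ω in {ω | q ω = 0}, Y ω ∂μ = 0 := by
    rw [← setIntegral_condExp hm hYi hset,
      setIntegral_congr_ae (g := fun _ ↦ (0 : ℝ)) (hm _ hset)
        (hlaw.mono fun ω h1 h2 ↦ h1.trans h2)]
    simp
  rw [setIntegral_eq_zero_iff_of_nonneg_ae (ae_of_all _ fun ω ↦ by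
    simp only [hY]; split_ifs <;> simp) hYi.integrableOn] at hzero
  filter_upwards [(ae_restrict_iff' (hm _ hset)).1 hzero] with ω h hPω hq0
  simpa [hY, hPω] using h hq0

/-- **Concentration of the orthogonalized estimator, two-action case (Lemma: estimator).**
Semiparametric contextual bandit with two actions under the environment and boundedness
assumptions.  At each round `t` the learner samples `a_t ∼ π_t`, where `π_t` is an
`F_t`-measurable distribution that is either a point mass or uniform over the two actions;
rewards are `r_t = ⟨θ, z_{t,a_t}⟩ + f_t + ξ_t`.  With `μ_t = E_{a∼π_t}[z_{t,a}]`,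
`Γ_t = λI + ∑_{τ<t}(z_τ−μ_τ)(z_τ−μ_τ)ᵀ`, `θ̂_t = Γ_t⁻¹ ∑_{τ<t}(z_τ−μ_τ)r_τ`, and
`γ(T) = √λ + √(9d log(1+T/(dλ)) + 18 log(T/δ))`, with probability at least `1 − δ`,
`‖θ̂_t − θ‖_{Γ_t} ≤ γ(T)` simultaneously for all rounds `t` (i.e. all sample sizes `< T`). -/
theorem stmt_13 {Ω : Type*} {m0 : MeasurableSpace Ω} [StandardBorelSpace Ω] [Nonempty Ω]
    (μ : Measure Ω) [IsProbabilityMeasure μ]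
    (ℱ : Filtration ℕ m0)
    {A : Type*} [Fintype A] [DecidableEq A] [Nonempty A] [MeasurableSpace A] [MeasurableSingletonClass A]
    (hcard : Fintype.card A = 2)
    {d T : ℕ} (hd : 0 < d)
    (δ lam : ℝ) (hδ : 0 < δ) (hδ1 : δ < 1) (hlam : 0 < lam)
    (θ : Fin d → ℝ) (hθ : Real.sqrt (θ ⬝ᵥ θ) ≤ 1)
    -- context features, confounder and noise: adapted, adversarial, bounded
    (z : ℕ → A → Ω → (Fin d → ℝ)) (f : ℕ → Ω → ℝ) (ξ : ℕ → Ω → ℝ)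
    (hzmeas : ∀ t b, Measurable[ℱ t] (z t b))
    (hzbd : ∀ t b ω, Real.sqrt (z t b ω ⬝ᵥ z t b ω) ≤ 1)
    (hfmeas : ∀ t, Measurable[ℱ t] (f t))
    (hfbd : ∀ t ω, f t ω ∈ Set.Icc (-1 : ℝ) 1)
    (hξmeas : ∀ t, Measurable[ℱ (t + 1)] (ξ t))
    (hξbd : ∀ t ω, |ξ t ω| ≤ 1)
    (hξcent : ∀ t, μ[ξ t | ℱ t] =ᵐ[μ] 0)
    -- the action and its conditional distribution
    (a : ℕ → Ω → A) (π : ℕ → Ω → A → ℝ)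
    (hameas : ∀ t, Measurable[ℱ (t + 1)] (a t))
    (hπmeas : ∀ t b, Measurable[ℱ t] (fun ω => π t ω b))
    (hπprob : ∀ t ω, (∀ b, 0 ≤ π t ω b) ∧ (∑ b, π t ω b) = 1)
    (hπlaw : ∀ t b, μ[(fun ω => if a t ω = b then (1 : ℝ) else 0) | ℱ t]
      =ᵐ[μ] fun ω => π t ω b)
    (hπshape : ∀ t ω, (∃ b, ∀ b', π t ω b' = if b' = b then 1 else 0) ∨
      (∀ b', π t ω b' = 1 / 2))
    (haξ : ∀ t, CondIndepFun (ℱ t) (ℱ.le t) (a t) (ξ t) μ)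
    -- rewards, mean features, and the orthogonalized estimator
    (r : ℕ → Ω → ℝ) (hr : ∀ t ω, r t ω = θ ⬝ᵥ z t (a t ω) ω + f t ω + ξ t ω)
    (mu : ℕ → Ω → (Fin d → ℝ)) (hmu : ∀ t ω, mu t ω = ∑ b, π t ω b • z t b ω)
    (Γ : ℕ → Ω → Matrix (Fin d) (Fin d) ℝ)
    (hΓ : ∀ t ω, Γ t ω = lam • (1 : Matrix (Fin d) (Fin d) ℝ) +
      ∑ τ ∈ Finset.range t,
        vecMulVec (z τ (a τ ω) ω - mu τ ω) (z τ (a τ ω) ω - mu τ ω))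
    (θhat : ℕ → Ω → (Fin d → ℝ))
    (hθhat : ∀ t ω, θhat t ω =
      (Γ t ω)⁻¹.mulVec (∑ τ ∈ Finset.range t, r τ ω • (z τ (a τ ω) ω - mu τ ω))) :
    ENNReal.ofReal (1 - δ) ≤
      μ {ω | ∀ t < T,
        Real.sqrt ((θhat t ω - θ) ⬝ᵥ (Γ t ω).mulVec (θhat t ω - θ)) ≤
          Real.sqrt lam +
            Real.sqrt (9 * d * Real.log (1 + T / (d * lam)) + 18 * Real.log (T / δ))} := by
  obtain ⟨b₀, b₁, hb, huniv⟩ := Finset.card_eq_two.1 (Finset.card_univ.trans hcard)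
  have hθ1 : θ ⬝ᵥ θ ≤ 1 := Real.sqrt_le_one.1 hθ
  have hz1 : ∀ t b ω, z t b ω ⬝ᵥ z t b ω ≤ 1 := fun t b ω ↦ Real.sqrt_le_one.1 (hzbd t b ω)
  have hmu2 : ∀ t ω, mu t ω = π t ω b₀ • z t b₀ ω + π t ω b₁ • z t b₁ ω := fun t ω ↦ by
    rw [hmu, huniv, Finset.sum_pair hb]
  have hπ2 : ∀ t ω, π t ω b₀ + π t ω b₁ = 1 := fun t ω ↦ by
    rw [← (hπprob t ω).2, huniv, Finset.sum_pair hb]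
  -- the `ℱ t`-measurable direction, the sign, and the scalar noise
  set ind : ℕ → Ω → ℝ := fun t ω ↦ if π t ω b₀ = 1 / 2 then 1 else 0 with hind
  set u : ℕ → Ω → Fin d → ℝ := fun t ω ↦ (ind t ω / 2) • (z t b₀ ω - z t b₁ ω) with hu
  set φ : A → ℝ := fun b ↦ if b = b₀ then 1 else -1 with hφ
  set g : ℕ → Ω → ℝ := fun t ω ↦ θ ⬝ᵥ mu t ω + f t ω with hg
  set X : ℕ → Ω → ℝ := fun t ω ↦ ind t ω * (φ (a t ω) * (g t ω + ξ t ω)) with hX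
  have hindm : ∀ t, Measurable[ℱ t] (ind t) := fun t ↦
    Measurable.ite (hπmeas t b₀ (measurableSet_singleton _)) measurable_const measurable_const
  have hind_abs : ∀ t ω, |ind t ω| ≤ 1 := fun t ω ↦ by
    simp only [hind]; split_ifs <;> simp
  have hum : ∀ t, Measurable[ℱ t] (u t) := fun t ↦
    ((hindm t).div_const 2).smul ((hzmeas t b₀).sub (hzmeas t b₁))
  have hub : ∀ t ω, u t ω ⬝ᵥ u t ω ≤ 1 := fun t ω ↦ by
    have h1 := real_dotProduct_self_nonneg (z t b₀ ω + z t b₁ ω)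
    have h2 := hz1 t b₀ ω
    have h3 := hz1 t b₁ ω
    have h4 := real_dotProduct_self_nonneg (z t b₀ ω - z t b₁ ω)
    have h5 : ind t ω ^ 2 ≤ 1 := (sq_le_one_iff_abs_le_one _).2 (hind_abs t ω)
    have h6 : (z t b₀ ω - z t b₁ ω) ⬝ᵥ (z t b₀ ω - z t b₁ ω) ≤ 4 := by
      simp only [add_dotProduct, dotProduct_add, sub_dotProduct, dotProduct_sub] at h1 ⊢
      linarith
    simp only [hu, smul_dotProduct, dotProduct_smul, smul_eq_mul]
    nlinarith [mul_le_mul h5 h6 h4 zero_le_one]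
  have hφm : Measurable φ := measurable_of_finite φ
  have hφabs : ∀ b, |φ b| = 1 := fun b ↦ by
    simp only [hφ]; split_ifs <;> simp
  have ham : ∀ t, Measurable (a t) := fun t ↦ (hameas t).mono (ℱ.le _) le_rfl
  have hξm : ∀ t, Measurable (ξ t) := fun t ↦ (hξmeas t).mono (ℱ.le _) le_rfl
  have hgm : ∀ t, Measurable[ℱ t] (g t) := fun t ↦ by
    refine Measurable.add ?_ (hfmeas t)
    have hmum : Measurable[ℱ t] (mu t) := by
      rw [funext (hmu2 t)]
      exact ((hπmeas t b₀).smul (hzmeas t b₀)).add ((hπmeas t b₁).smul (hzmeas t b₁))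
    simp only [dotProduct]
    exact Finset.measurable_fun_sum _ fun i _ ↦
      ((measurable_pi_apply i).comp hmum).const_mul _
  have hgabs : ∀ t ω, |g t ω| ≤ 2 := fun t ω ↦ by
    have hzθ : ∀ b, |θ ⬝ᵥ z t b ω| ≤ 1 := fun b ↦ by
      rw [← sq_le_one_iff_abs_le_one]
      exact (dotProduct_sq_le _ _).trans
        (mul_le_one₀ hθ1 (real_dotProduct_self_nonneg _) (hz1 t b ω))
    have h0 := abs_le.1 (hzθ b₀)
    have h1 := abs_le.1 (hzθ b₁)
    have hf := hfbd t ω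
    have hp0 := (hπprob t ω).1 b₀
    have hp1 := (hπprob t ω).1 b₁
    have hp := hπ2 t ω
    simp only [hg, hmu2, dotProduct_add, dotProduct_smul, smul_eq_mul]
    rw [abs_le]
    constructor <;> nlinarith [hf.1, hf.2]
  have hXm : ∀ t, Measurable[ℱ (t + 1)] (X t) := fun t ↦ by
    have hmono := ℱ.mono (Nat.le_succ t)
    exact ((hindm t).mono hmono le_rfl).mul
      ((hφm.comp (hameas t)).mul (((hgm t).mono hmono le_rfl).add (hξmeas t)))
  have hXabs : ∀ t ω, |X t ω| ≤ 3 := fun t ω ↦ by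
    simp only [hX]
    rw [abs_mul, abs_mul, hφabs, one_mul]
    have h1 : |g t ω + ξ t ω| ≤ 3 :=
      (abs_add_le _ _).trans (by linarith [hgabs t ω, hξbd t ω])
    exact (mul_le_of_le_one_left (abs_nonneg _) (hind_abs t ω)).trans h1
  have hξi : ∀ t, Integrable (ξ t) μ := fun t ↦
    Integrable.of_bound (hξm t).aestronglyMeasurable 1 (ae_of_all _ (hξbd t))
  have hφam : ∀ t, Measurable fun ω ↦ φ (a t ω) := fun t ↦ hφm.comp (ham t)
  have hφi : ∀ t, Integrable (fun ω ↦ φ (a t ω)) μ := fun t ↦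
    Integrable.of_bound (hφam t).aestronglyMeasurable 1 (ae_of_all _ fun ω ↦ (hφabs _).le)
  have hφξi : ∀ t, Integrable ((fun ω ↦ φ (a t ω)) * ξ t) μ := fun t ↦
    (hξi t).bdd_mul (hφam t).aestronglyMeasurable (ae_of_all _ fun ω ↦ (hφabs _).le)
  have hφcond : ∀ t, μ[fun ω ↦ φ (a t ω) | ℱ t] =ᵐ[μ] fun ω ↦ 2 * π t ω b₀ - 1 := fun t ↦ by
    set Y : Ω → ℝ := fun ω ↦ if a t ω = b₀ then (1 : ℝ) else 0 with hY
    have hYi : Integrable Y μ :=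
      Integrable.of_bound (Measurable.ite (ham t (measurableSet_singleton b₀)) measurable_const
        measurable_const).aestronglyMeasurable 1
        (ae_of_all _ fun ω ↦ by simp only [hY]; split_ifs <;> simp)
    have heq : (fun ω ↦ φ (a t ω)) = (2 : ℝ) • Y - fun _ ↦ (1 : ℝ) := by
      ext ω
      simp only [hφ, hY, Pi.sub_apply, Pi.smul_apply, smul_eq_mul]
      split_ifs <;> norm_num
    rw [heq]
    filter_upwards [condExp_sub (hYi.smul (2 : ℝ)) (integrable_const (1 : ℝ)) (ℱ t),
      condExp_smul (μ := μ) (2 : ℝ) Y (ℱ t), hπlaw t b₀] with ω h1 h2 h3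
    rw [h1, Pi.sub_apply, h2, Pi.smul_apply, h3, condExp_const (ℱ.le t)]
    rfl
  have hX0 : ∀ t, μ[X t | ℱ t] =ᵐ[μ] 0 := fun t ↦ by
    have heq : X t = (fun ω ↦ ind t ω * g t ω) * (fun ω ↦ φ (a t ω))
        + ind t * ((fun ω ↦ φ (a t ω)) * ξ t) := by
      ext ω
      simp only [hX, Pi.add_apply, Pi.mul_apply]
      ring
    have hig : Measurable[ℱ t] fun ω ↦ ind t ω * g t ω := (hindm t).mul (hgm t)
    have hig2 : ∀ ω, ‖ind t ω * g t ω‖ ≤ 2 := fun ω ↦ by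
      rw [Real.norm_eq_abs, abs_mul]
      exact (mul_le_of_le_one_left (abs_nonneg _) (hind_abs t ω)).trans (hgabs t ω)
    have hi1 : Integrable ((fun ω ↦ ind t ω * g t ω) * (fun ω ↦ φ (a t ω))) μ :=
      (hφi t).bdd_mul (hig.mono (ℱ.le t) le_rfl).aestronglyMeasurable (ae_of_all _ hig2)
    have hi2 : Integrable (ind t * ((fun ω ↦ φ (a t ω)) * ξ t)) μ :=
      (hφξi t).bdd_mul ((hindm t).mono (ℱ.le t) le_rfl).aestronglyMeasurable
        (ae_of_all _ (hind_abs t))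
    have hci : CondIndepFun (ℱ t) (ℱ.le t) (fun ω ↦ φ (a t ω)) (ξ t) μ :=
      (haξ t).comp hφm measurable_id
    rw [heq]
    filter_upwards [condExp_add hi1 hi2 (ℱ t),
      condExp_stronglyMeasurable_mul_of_bound (ℱ.le t) hig.stronglyMeasurable (hφi t) 2
        (ae_of_all _ hig2),
      condExp_stronglyMeasurable_mul_of_bound (ℱ.le t) (hindm t).stronglyMeasurable (hφξi t) 1
        (ae_of_all _ (hind_abs t)),
      condExp_mul_of_condIndepFun (ℱ.le t) (hφam t) (hξm t) (hφi t) (hξi t) (hφξi t) hci,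
      hφcond t, hξcent t] with ω h1 h2 h3 h4 h5 h6
    rw [h1, Pi.add_apply, h2, h3, Pi.mul_apply, Pi.mul_apply, h4, Pi.mul_apply, h5, h6]
    simp only [hind, Pi.zero_apply]
    split_ifs with h
    · rw [h]; norm_num
    · simp
  have hsupp : ∀ᵐ ω ∂μ, ∀ t b, a t ω = b → π t ω b ≠ 0 := by
    rw [ae_all_iff]
    intro t
    rw [ae_all_iff]
    exact fun b ↦ ae_ne_zero_of_condExp_ite_eq (ℱ.le t) (ham t (measurableSet_singleton b))
      (hπmeas t b) (hπlaw t b)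
  have hcenter : ∀ ω, (∀ t b, a t ω = b → π t ω b ≠ 0) → ∀ t,
      z t (a t ω) ω - mu t ω = φ (a t ω) • u t ω := by
    intro ω hω t
    have hpos := hω t _ rfl
    have hmem : a t ω = b₀ ∨ a t ω = b₁ := by
      have : a t ω ∈ (univ : Finset A) := Finset.mem_univ _
      simpa [huniv] using this
    rcases hπshape t ω with ⟨b, hbπ⟩ | hunif
    · have hab : a t ω = b := by
        by_contra hne
        exact hpos (by rw [hbπ, if_neg hne])
      have hind0 : ind t ω = 0 := by
        simp only [hind]
        refine if_neg ?_
        rw [hbπ]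
        split_ifs <;> norm_num
      have hmub : mu t ω = z t b ω := by
        rw [hmu]
        simp [hbπ]
      simp [hu, hind0, hmub, hab]
    · have hind1 : ind t ω = 1 := by simp [hind, hunif]
      ext i
      rcases hmem with h | h
      · simp only [hmu2, hunif, hu, hind1, h, hφ, if_true, Pi.sub_apply, Pi.add_apply,
          Pi.smul_apply, smul_eq_mul]
        ring
      · simp only [hmu2, hunif, hu, hind1, h, hφ, if_neg hb.symm, Pi.sub_apply, Pi.add_apply,
          Pi.smul_apply, smul_eq_mul]
        ring
  set bad : ℕ → Set Ω := fun t ↦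
    {ω | 3 ^ 2 * (Real.log (regGram lam (u · ω) t).det - d * Real.log lam)
          + 2 * 3 ^ 2 * Real.log (1 / (δ / T))
        < (∑ τ ∈ range t, X τ ω • u τ ω) ⬝ᵥ
          (regGram lam (u · ω) t)⁻¹ *ᵥ (∑ τ ∈ range t, X τ ω • u τ ω)} with hbad
  -- outside the exceptional events the estimator is accurate
  have hgood : ∀ ω, (∀ t b, a t ω = b → π t ω b ≠ 0) → ∀ t < T, ω ∉ bad t →
      Real.sqrt ((θhat t ω - θ) ⬝ᵥ (Γ t ω).mulVec (θhat t ω - θ)) ≤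
          Real.sqrt lam +
            Real.sqrt (9 * d * Real.log (1 + T / (d * lam)) + 18 * Real.log (T / δ)) := by
    intro ω hω t htT hnot
    have hΓeq : Γ t ω = regGram lam (u · ω) t := by
      rw [hΓ, regGram]
      congr 1
      refine Finset.sum_congr rfl fun τ _ ↦ ?_
      rw [hcenter ω hω τ, smul_vecMulVec, vecMulVec_smul, smul_smul, ← abs_mul_abs_self, hφabs]
      simp
    set M := regGram lam (u · ω) t with hM
    have hMpos : M.PosDef := posDef_regGram hlam _ t
    have hsum : ∑ τ ∈ range t, r τ ω • (z τ (a τ ω) ω - mu τ ω)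
        = (∑ τ ∈ range t, X τ ω • u τ ω - lam • θ) + M *ᵥ θ := by
      have hMθ : M *ᵥ θ = lam • θ + ∑ τ ∈ range t, (u τ ω ⬝ᵥ θ) • u τ ω := by
        rw [hM, regGram, add_mulVec, smul_mulVec, one_mulVec, sum_mulVec]
        congr 1
        refine Finset.sum_congr rfl fun τ _ ↦ ?_
        rw [vecMulVec_mulVec]
        simp
      rw [hMθ, ← add_assoc, sub_add_cancel, ← Finset.sum_add_distrib]
      refine Finset.sum_congr rfl fun τ _ ↦ ?_
      have hzeq : z τ (a τ ω) ω = mu τ ω + φ (a τ ω) • u τ ω := by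
        rw [← hcenter ω hω τ]; abel
      have hφφ : φ (a τ ω) * φ (a τ ω) = 1 := by
        rw [← abs_mul_abs_self, hφabs, one_mul]
      have hindu : ind τ ω • u τ ω = u τ ω := by
        simp only [hu, hind]
        split_ifs <;> simp
      rw [hcenter ω hω τ, hr, hzeq, ← add_smul, smul_smul]
      have hXu : X τ ω • u τ ω = (φ (a τ ω) * (g τ ω + ξ τ ω)) • u τ ω := by
        calc X τ ω • u τ ω = (φ (a τ ω) * (g τ ω + ξ τ ω)) • ind τ ω • u τ ω := by
              rw [smul_smul _ (ind τ ω) (u τ ω), mul_comm _ (ind τ ω)]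
          _ = _ := by rw [hindu]
      rw [add_smul, hXu, ← add_smul]
      congr 1
      simp only [hg, dotProduct_add, dotProduct_smul, smul_eq_mul, dotProduct_comm (u τ ω) θ]
      linear_combination (θ ⬝ᵥ u τ ω) * hφφ
    have herr : θhat t ω - θ = M⁻¹ *ᵥ (∑ τ ∈ range t, X τ ω • u τ ω - lam • θ) := by
      rw [hθhat, hΓeq, hsum, mulVec_add, mulVec_mulVec,
        nonsing_inv_mul _ hMpos.det_pos.ne'.isUnit, one_mulVec, add_sub_cancel_right]
    rw [herr, hΓeq]
    refine (sqrt_quadratic_inv_regGram_le hlam (u · ω) t hθ1 _).trans ?_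
    gcongr
    have hlog := log_det_regGram_sub_le hd hlam (u := (u · ω)) (fun τ ↦ hub τ ω) htT.le
    simp only [hbad, Set.mem_ofPred_eq, not_lt, one_div_div] at hnot
    linarith
  have hbadμ : ∀ t ∈ range T, μ (bad t) ≤ ENNReal.ofReal (δ / T) := fun t ht ↦ by
    have hT : (0 : ℝ) < T := by
      exact_mod_cast (Nat.zero_le t).trans_lt (Finset.mem_range.1 ht)
    exact measure_selfNormalized_gt_le ℱ hlam three_pos (div_pos hδ hT) hum hub hXm hXabs hX0 t
  set good : Set Ω := {ω | ∀ t < T,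
        Real.sqrt ((θhat t ω - θ) ⬝ᵥ (Γ t ω).mulVec (θhat t ω - θ)) ≤
          Real.sqrt lam +
            Real.sqrt (9 * d * Real.log (1 + T / (d * lam)) + 18 * Real.log (T / δ))}
  have hcompl : μ goodᶜ ≤ ENNReal.ofReal δ := by
    calc μ goodᶜ ≤ μ (⋃ t ∈ range T, bad t) := by
          refine measure_mono_ae ?_
          filter_upwards [hsupp] with ω hω hmem
          by_contra hnot
          refine hmem fun t ht ↦ hgood ω hω t ht fun hb' ↦ hnot ?_
          exact Set.mem_biUnion (Finset.mem_coe.2 (Finset.mem_range.2 ht)) hb'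
      _ ≤ ∑ t ∈ range T, μ (bad t) := measure_biUnion_finset_le _ _
      _ ≤ ∑ _t ∈ range T, ENNReal.ofReal (δ / T) := Finset.sum_le_sum hbadμ
      _ = ENNReal.ofReal (T * (δ / T)) := by
          rw [Finset.sum_const, Finset.card_range, nsmul_eq_mul,
            ENNReal.ofReal_mul (Nat.cast_nonneg T), ENNReal.ofReal_natCast]
      _ ≤ ENNReal.ofReal δ := by
          refine ENNReal.ofReal_le_ofReal ?_
          rcases eq_or_ne (T : ℝ) 0 with h | h
          · simp [h, hδ.le]
          · rw [mul_div_cancel₀ _ h]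
  rw [ENNReal.ofReal_sub _ hδ.le, ENNReal.ofReal_one, tsub_le_iff_right]
  calc (1 : ENNReal) = μ (good ∪ goodᶜ) := by rw [Set.union_compl_self, measure_univ]
    _ ≤ μ good + μ goodᶜ := measure_union_le _ _
    _ ≤ μ good + ENNReal.ofReal δ := by gcongr
end
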